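/- arXiv:1802.08353 — 2 statements merged into one kernel-verified Lean document; each statement's English description precedes it below -/
import Mathlib

section
/- Let I be a *-super homogeneous ideal of D with M = M(I), and let J be a *-super homogeneous ideal of D with J ⊆ M. Then: (a) I ⊆ J* or J ⊆ I*; (b) (IJ)* is a *-super homogeneous ideal. -/
open scoped nonZeroDivisors

/-- A star operation on the nonzero fractional ideals of an integral domain `D`
with quotient field `K`: it fixes nonzero principal fractional ideals, commutes with
multiplication by nonzero principal fractional ideals, is extensive, monotone and
idempotent (on nonzero fractional ideals). -/
structure StarOperation (D K : Type*) [CommRing D] [IsDomain D] [Field K]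
    [Algebra D K] [IsFractionRing D K] where
  star : FractionalIdeal D⁰ K → FractionalIdeal D⁰ K
  star_spanSingleton : ∀ x : K, x ≠ 0 →
    star (FractionalIdeal.spanSingleton D⁰ x) = FractionalIdeal.spanSingleton D⁰ x
  star_smul : ∀ (x : K) (I : FractionalIdeal D⁰ K), x ≠ 0 → I ≠ 0 →
    star (FractionalIdeal.spanSingleton D⁰ x * I) = FractionalIdeal.spanSingleton D⁰ x * star I
  le_star : ∀ I : FractionalIdeal D⁰ K, I ≠ 0 → I ≤ star I
  star_mono : ∀ I J : FractionalIdeal D⁰ K, I ≠ 0 → J ≠ 0 → I ≤ J → star I ≤ star J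
  star_idem : ∀ I : FractionalIdeal D⁰ K, I ≠ 0 → star (star I) = star I

namespace StarOperation

variable {D K : Type*} [CommRing D] [IsDomain D] [Field K] [Algebra D K] [IsFractionRing D K]
variable (s : StarOperation D K)

/-- `*` has finite character: for every nonzero fractional ideal `I`, `I^*` is the union
of `J^*` over the nonzero finitely generated fractional subideals `J` of `I`. -/
def FiniteCharacter : Prop :=
  ∀ I : FractionalIdeal D⁰ K, I ≠ 0 → ∀ x ∈ s.star I,
    ∃ J : FractionalIdeal D⁰ K, J ≠ 0 ∧ (J : Submodule D K).FG ∧ J ≤ I ∧ x ∈ s.star J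

/-- A (nonzero) integral ideal `I` of `D` is a `*`-ideal if `I^* = I`. -/
def IsStarIdeal (I : Ideal D) : Prop :=
  I ≠ ⊥ ∧ s.star (I : FractionalIdeal D⁰ K) = (I : FractionalIdeal D⁰ K)

/-- An integral ideal `I` of `D` is a `*`-ideal of finite type if `I = J^*` for some
nonzero finitely generated ideal `J`. -/
def IsFiniteTypeStarIdeal (I : Ideal D) : Prop :=
  ∃ J : Ideal D, J ≠ ⊥ ∧ J.FG ∧
    s.star (J : FractionalIdeal D⁰ K) = (I : FractionalIdeal D⁰ K)

/-- A maximal `*`-ideal: maximal among proper integral `*`-ideals. -/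
def IsMaxStarIdeal (M : Ideal D) : Prop :=
  M ≠ ⊤ ∧ s.IsStarIdeal M ∧ ∀ J : Ideal D, J ≠ ⊤ → s.IsStarIdeal J → M ≤ J → J = M

/-- `I` is `*`-homogeneous: a proper `*`-ideal of finite type such that `(J + J')^* ≠ D`
for every pair `J`, `J'` of proper `*`-ideals of finite type containing `I`. -/
def IsHomog (I : Ideal D) : Prop :=
  I ≠ ⊤ ∧ s.IsStarIdeal I ∧ s.IsFiniteTypeStarIdeal I ∧
    ∀ J J' : Ideal D, J ≠ ⊤ → J' ≠ ⊤ → s.IsStarIdeal J → s.IsStarIdeal J' →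
      s.IsFiniteTypeStarIdeal J → s.IsFiniteTypeStarIdeal J' → I ≤ J → I ≤ J' →
      s.star ((J + J' : Ideal D) : FractionalIdeal D⁰ K) ≠ 1

/-- The set `M(I) = {x ∈ D : (xD + I)^* ≠ D}` attached to an ideal `I`. -/
def MSet (I : Ideal D) : Set D :=
  {x : D | s.star ((Ideal.span {x} + I : Ideal D) : FractionalIdeal D⁰ K) ≠ 1}

/-- `A` and `B` are `*`-comaximal if `(A + B)^* = D`. -/
def StarComaximal (A B : Ideal D) : Prop :=
  s.star ((A + B : Ideal D) : FractionalIdeal D⁰ K) = 1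

/-- An integral ideal `I` is `*`-invertible if `(I · I⁻¹)^* = D`. -/
def StarInvertible (I : Ideal D) : Prop :=
  s.star ((I : FractionalIdeal D⁰ K) * (I : FractionalIdeal D⁰ K)⁻¹) = 1

/-- `D` is a `*`-SH domain: every principal ideal generated by a nonzero nonunit is a
`*`-product of finitely many `*`-homogeneous ideals. -/
def IsSHDomain : Prop :=
  ∀ x : D, x ≠ 0 → ¬IsUnit x →
    ∃ T : Multiset (Ideal D), (∀ J ∈ T, s.IsHomog J) ∧
      s.star ((T.prod : Ideal D) : FractionalIdeal D⁰ K) =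
        ((Ideal.span {x} : Ideal D) : FractionalIdeal D⁰ K)

/-- `D` has finite `*`-character: every nonzero nonunit lies in only finitely many
maximal `*`-ideals. -/
def FiniteStarCharacter : Prop :=
  ∀ x : D, x ≠ 0 → ¬IsUnit x → {P : Ideal D | s.IsMaxStarIdeal P ∧ x ∈ P}.Finite

end StarOperation

namespace StarOperation

variable {D K : Type*} [CommRing D] [IsDomain D] [Field K] [Algebra D K] [IsFractionRing D K]

/-- A `*`-homogeneous ideal `I` is `*`-super homogeneous if every `*`-ideal of finite
type containing `I` is `*`-invertible. -/
def IsSuperHomog (s : StarOperation D K) (I : Ideal D) : Prop :=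
  s.IsHomog I ∧ ∀ J : Ideal D, s.IsStarIdeal J → s.IsFiniteTypeStarIdeal J → I ≤ J →
    s.StarInvertible J

end StarOperation

namespace StarOperation

section Helpers

variable {D K : Type*} [CommRing D] [IsDomain D] [Field K] [Algebra D K] [IsFractionRing D K]

open Classical in
/-- The star operation extended by `0 ↦ 0`. -/
noncomputable def cl (s : StarOperation D K) (X : FractionalIdeal D⁰ K) : FractionalIdeal D⁰ K :=
  if X = 0 then 0 else s.star X

variable (s : StarOperation D K)

lemma cl_of_ne {X : FractionalIdeal D⁰ K} (h : X ≠ 0) : s.cl X = s.star X := by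
  simp [cl, h]

lemma cl_zero : s.cl 0 = 0 := by simp [cl]

lemma le_cl (X : FractionalIdeal D⁰ K) : X ≤ s.cl X := by
  by_cases h : X = 0
  · subst h; simp [cl]
  · rw [s.cl_of_ne h]; exact s.le_star X h

lemma cl_mono {X Y : FractionalIdeal D⁰ K} (h : X ≤ Y) : s.cl X ≤ s.cl Y := by
  by_cases hX : X = 0
  · subst hX; rw [cl_zero]; exact zero_le
  · have hY : Y ≠ 0 := by
      rintro rfl
      exact hX (le_antisymm h zero_le)
    rw [s.cl_of_ne hX, s.cl_of_ne hY]
    exact s.star_mono X Y hX hY h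

lemma cl_ne_zero {X : FractionalIdeal D⁰ K} (h : X ≠ 0) : s.cl X ≠ 0 := by
  intro h0
  exact h (le_antisymm (h0 ▸ s.le_cl X) zero_le)

lemma cl_idem (X : FractionalIdeal D⁰ K) : s.cl (s.cl X) = s.cl X := by
  by_cases h : X = 0
  · subst h; rw [cl_zero, cl_zero]
  · rw [s.cl_of_ne (s.cl_ne_zero h), s.cl_of_ne h, s.star_idem X h]

lemma cl_le {X Y : FractionalIdeal D⁰ K} (h : X ≤ s.cl Y) : s.cl X ≤ s.cl Y :=
  (s.cl_mono h).trans (s.cl_idem Y).le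

lemma cl_one : s.cl 1 = 1 := by
  rw [s.cl_of_ne one_ne_zero]
  have := s.star_spanSingleton 1 one_ne_zero
  rwa [FractionalIdeal.spanSingleton_one] at this

lemma cl_le_one {X : FractionalIdeal D⁰ K} (h : X ≤ 1) : s.cl X ≤ 1 :=
  (s.cl_mono h).trans s.cl_one.le

lemma fi_mul_ne_zero {X Y : FractionalIdeal D⁰ K} (hX : X ≠ 0) (hY : Y ≠ 0) : X * Y ≠ 0 := by
  intro h
  rw [Ne, FractionalIdeal.eq_zero_iff] at hX hY
  push Not at hX hY
  obtain ⟨x, hx, hx0⟩ := hX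
  obtain ⟨y, hy, hy0⟩ := hY
  have := FractionalIdeal.mul_mem_mul hx hy
  rw [h, FractionalIdeal.mem_zero_iff] at this
  exact mul_ne_zero hx0 hy0 this

lemma mul_cl (X Y : FractionalIdeal D⁰ K) : X * s.cl Y ≤ s.cl (X * Y) := by
  by_cases hY : Y = 0
  · subst hY; simp [cl_zero]
  rw [FractionalIdeal.mul_le]
  intro i hi j hj
  by_cases hi0 : i = 0
  · subst hi0; rw [zero_mul]; exact FractionalIdeal.zero_mem _
  have h1 : FractionalIdeal.spanSingleton D⁰ i * Y ≤ X * Y :=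
    mul_le_mul_left (by rwa [FractionalIdeal.spanSingleton_le_iff_mem]) Y
  have h2 : FractionalIdeal.spanSingleton D⁰ i * Y ≠ 0 :=
    fi_mul_ne_zero (by rwa [Ne, FractionalIdeal.spanSingleton_eq_zero_iff]) hY
  have h3 := s.cl_mono h1
  rw [s.cl_of_ne h2, s.star_smul i Y hi0 hY, ← s.cl_of_ne hY] at h3
  exact h3 (FractionalIdeal.mul_mem_mul (FractionalIdeal.mem_spanSingleton_self _ i) hj)

lemma cl_mul (X Y : FractionalIdeal D⁰ K) : s.cl X * Y ≤ s.cl (X * Y) := by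
  rw [mul_comm, mul_comm X]; exact s.mul_cl Y X

lemma cl_mul_cl (X Y : FractionalIdeal D⁰ K) : s.cl X * s.cl Y ≤ s.cl (X * Y) :=
  (s.cl_mul X _).trans (s.cl_le (s.mul_cl X Y))

lemma add_le_fi {X Y Z : FractionalIdeal D⁰ K} (h : X ≤ Z) (h' : Y ≤ Z) : X + Y ≤ Z := by
  rw [← FractionalIdeal.sup_eq_add]; exact sup_le h h'

lemma full_absorb {C F : FractionalIdeal D⁰ K} (X : FractionalIdeal D⁰ K) (hC : C ≤ 1)
    (h : 1 ≤ s.cl (C * F)) : X ≤ s.cl (X * F) :=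
  calc X = X * 1 := (mul_one X).symm
    _ ≤ X * s.cl (C * F) := mul_le_mul_right h X
    _ ≤ s.cl (X * (C * F)) := s.mul_cl _ _
    _ ≤ s.cl (X * F) := s.cl_mono (mul_le_mul_right
          ((mul_le_mul_left hC F).trans (one_mul F).le) X)

lemma le_of_full {C F X : FractionalIdeal D⁰ K} (hC : C * F ≤ 1)
    (h : 1 ≤ s.cl (X * F)) : C ≤ s.cl X :=
  calc C = C * 1 := (mul_one C).symm
    _ ≤ C * s.cl (X * F) := mul_le_mul_right h C
    _ ≤ s.cl (C * (X * F)) := s.mul_cl _ _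
    _ = s.cl (X * (C * F)) := by rw [mul_left_comm]
    _ ≤ s.cl (X * 1) := s.cl_mono (mul_le_mul_right hC X)
    _ = s.cl X := by rw [mul_one]

/-- finitely generated fractional ideals -/
def Fin' (X : FractionalIdeal D⁰ K) : Prop := (X : Submodule D K).FG

lemma Fin'.add {X Y : FractionalIdeal D⁰ K} (h : Fin' X) (h' : Fin' Y) : Fin' (X + Y) := by
  unfold Fin' at *; rw [FractionalIdeal.coe_add]; exact h.sup h'

lemma Fin'.mul {X Y : FractionalIdeal D⁰ K} (h : Fin' X) (h' : Fin' Y) : Fin' (X * Y) := by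
  unfold Fin' at *; rw [FractionalIdeal.coe_mul]; exact Submodule.FG.mul h h'

/-- internal version of homogeneity, for a finitely generated generator -/
structure HH (H : FractionalIdeal D⁰ K) : Prop where
  fg : Fin' H
  le_one : H ≤ 1
  proper : ¬ 1 ≤ s.cl H
  hom : ∀ A B : FractionalIdeal D⁰ K, Fin' A → Fin' B → A ≤ 1 → B ≤ 1 → H ≤ s.cl A → H ≤ s.cl B →
    1 ≤ s.cl (A + B) → 1 ≤ s.cl A ∨ 1 ≤ s.cl B

/-- internal version of super homogeneity -/
structure SH (H : FractionalIdeal D⁰ K) : Prop extends HH s H where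
  inv : ∀ A : FractionalIdeal D⁰ K, Fin' A → A ≤ 1 → H ≤ s.cl A →
    ∃ F, Fin' F ∧ A * F ≤ 1 ∧ 1 ≤ s.cl (A * F)

variable {s}

lemma SH.comparable {I J : FractionalIdeal D⁰ K} (hI : s.SH I) (hJ : s.SH J)
    (hC : ¬ 1 ≤ s.cl (I + J)) : I ≤ s.cl J ∨ J ≤ s.cl I := by
  have hC1 : I + J ≤ 1 := add_le_fi hI.le_one hJ.le_one
  have hCf : Fin' (I + J) := hI.fg.add hJ.fg
  have hIC : I ≤ I + J := le_self_add
  have hJC : J ≤ I + J := le_add_self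
  obtain ⟨F, hF, h1, h2⟩ := hI.inv _ hCf hC1 (hIC.trans (s.le_cl _))
  have hA1 : I * F ≤ 1 := (mul_le_mul_left hIC F).trans h1
  have hB1 : J * F ≤ 1 := (mul_le_mul_left hJC F).trans h1
  have hA : I ≤ s.cl (I * F) := s.full_absorb I hC1 h2
  have hB : J ≤ s.cl (J * F) := s.full_absorb J hC1 h2
  rcases hI.hom (I * F) ((I + J) + J * F) (hI.fg.mul hF) (hCf.add (hJ.fg.mul hF)) hA1
    (add_le_fi hC1 hB1) hA ((hIC.trans le_self_add).trans (s.le_cl _))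
    (h2.trans (s.cl_mono (by
      rw [add_mul]; exact add_le_fi le_self_add (le_add_self.trans le_add_self)))) with h | h
  · right
    exact hJC.trans (s.le_of_full h1 h)
  · rcases hJ.hom (I + J) (J * F) hCf (hJ.fg.mul hF) hC1 hB1 (hJC.trans (s.le_cl _)) hB h with h | h
    · exact absurd h hC
    · left
      exact hIC.trans (s.le_of_full h1 h)

lemma SH.mul_HH {I J : FractionalIdeal D⁰ K} (hI : s.SH I) (hJ : s.SH J)
    (hC : ¬ 1 ≤ s.cl (I + J)) : s.HH (I * J) := by
  have hC1 : I + J ≤ 1 := add_le_fi hI.le_one hJ.le_one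
  have hCf : Fin' (I + J) := hI.fg.add hJ.fg
  have hIC : I ≤ I + J := le_self_add
  have hJC : J ≤ I + J := le_add_self
  have hIJ : I * J ≤ I := (mul_le_mul_right hJ.le_one I).trans (mul_one I).le
  have key : ∀ A : FractionalIdeal D⁰ K, Fin' A → A ≤ 1 → I * J ≤ s.cl A →
      1 ≤ s.cl (A + (I + J)) → 1 ≤ s.cl A := by
    intro A hA hA1 hle hfull
    have e1 : 1 ≤ s.cl (A + I) := by
      rcases hI.hom (A + I) (I + J) (hA.add hI.fg) hCf (add_le_fi hA1 hI.le_one) hC1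
        (le_add_self.trans (s.le_cl _)) (hIC.trans (s.le_cl _))
        (hfull.trans (s.cl_mono (add_le_fi (le_self_add.trans le_self_add) le_add_self))) with h | h
      · exact h
      · exact absurd h hC
    have e2 : 1 ≤ s.cl (A + J) := by
      rcases hJ.hom (A + J) (I + J) (hA.add hJ.fg) hCf (add_le_fi hA1 hJ.le_one) hC1
        (le_add_self.trans (s.le_cl _)) (hJC.trans (s.le_cl _))
        (hfull.trans (s.cl_mono (add_le_fi (le_self_add.trans le_self_add) le_add_self))) with h | h
      · exact h
      · exact absurd h hC
    have e3 : (A + I) * (A + J) ≤ s.cl A := by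
      rw [add_mul, mul_add I]
      refine add_le_fi ?_ (add_le_fi ?_ hle)
      · refine le_trans ?_ (s.le_cl A)
        exact (mul_le_mul_right (add_le_fi hA1 hJ.le_one) A).trans (mul_one A).le
      · refine le_trans ?_ (s.le_cl A)
        exact (mul_le_mul_left hI.le_one A).trans (one_mul A).le
    calc (1 : FractionalIdeal D⁰ K) = 1 * 1 := (one_mul 1).symm
      _ ≤ s.cl (A + I) * s.cl (A + J) := mul_le_mul' e1 e2
      _ ≤ s.cl ((A + I) * (A + J)) := s.cl_mul_cl _ _
      _ ≤ s.cl A := s.cl_le e3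
  refine ⟨hI.fg.mul hJ.fg, hIJ.trans hI.le_one, fun h => hI.proper (h.trans (s.cl_mono hIJ)), ?_⟩
  intro A B hA hB hA1 hB1 hIA hIB hAB
  rcases hI.hom (A + (I + J)) (B + (I + J)) (hA.add hCf) (hB.add hCf) (add_le_fi hA1 hC1)
    (add_le_fi hB1 hC1) ((hIC.trans le_add_self).trans (s.le_cl _))
    ((hIC.trans le_add_self).trans (s.le_cl _))
    (hAB.trans (s.cl_mono (add_le_add le_self_add le_self_add))) with h | h
  · exact Or.inl (key A hA hA1 hIA h)
  · exact Or.inr (key B hB hB1 hIB h)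

lemma SH.mul {I J : FractionalIdeal D⁰ K} (hI : s.SH I) (hJ : s.SH J)
    (hC : ¬ 1 ≤ s.cl (I + J)) : s.SH (I * J) := by
  have hL := hI.mul_HH hJ hC
  refine ⟨hL, ?_⟩
  intro A hA hA1 hle
  have hIJ : I * J ≤ I := (mul_le_mul_right hJ.le_one I).trans (mul_one I).le
  have hC1 : A + I ≤ 1 := add_le_fi hA1 hI.le_one
  obtain ⟨F, hF, h1, h2⟩ := hI.inv (A + I) (hA.add hI.fg) hC1 (le_add_self.trans (s.le_cl _))
  have hAA : A ≤ s.cl (A * F) := s.full_absorb A hC1 h2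
  have hII : I ≤ s.cl (I * F) := s.full_absorb I hC1 h2
  rcases hL.hom (A * F) (I * F) (hA.mul hF) (hI.fg.mul hF)
    ((mul_le_mul_left le_self_add F).trans h1) ((mul_le_mul_left le_add_self F).trans h1)
    (hle.trans (s.cl_le hAA)) (hIJ.trans hII) (by rwa [← add_mul]) with h | h
  · exact hI.inv A hA hA1 (le_add_self.trans (s.le_of_full h1 h))
  · have hAI : A ≤ s.cl I := le_self_add.trans (s.le_of_full h1 h)
    obtain ⟨G, hG, g1, g2⟩ := hI.inv I hI.fg hI.le_one (s.le_cl _)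
    have hAG : A * G ≤ 1 :=
      (mul_le_mul_left hAI G).trans ((s.cl_mul I G).trans (s.cl_le_one g1))
    have hJA : J ≤ s.cl (A * G) :=
      calc J = J * 1 := (mul_one J).symm
        _ ≤ J * s.cl (I * G) := mul_le_mul_right g2 J
        _ ≤ s.cl (J * (I * G)) := s.mul_cl _ _
        _ = s.cl ((I * J) * G) := by rw [← mul_assoc, mul_comm J]
        _ ≤ s.cl (s.cl A * G) := s.cl_mono (mul_le_mul_left hle G)
        _ ≤ s.cl (A * G) := s.cl_le (s.cl_mul A G)
    obtain ⟨E, hE, e1, e2⟩ := hJ.inv (A * G) (hA.mul hG) hAG hJA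
    exact ⟨G * E, hG.mul hE, by rwa [← mul_assoc], by rwa [← mul_assoc]⟩

lemma fin'_coe {A : Ideal D} : Fin' (A : FractionalIdeal D⁰ K) ↔ A.FG :=
  FractionalIdeal.coeIdeal_fg D⁰ (IsFractionRing.injective D K) A

lemma fg_le_mul {P Q : Submodule D K} (G : Submodule D K) (hG : G.FG) (h : G ≤ P * Q) :
    ∃ N ≤ Q, N.FG ∧ G ≤ P * N := by
  revert h
  refine Submodule.fg_induction (motive := fun G _ => G ≤ P * Q → ∃ N ≤ Q, N.FG ∧ G ≤ P * N)
    ?_ ?_ G hG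
  · intro x hx
    obtain ⟨S, T, hS, hT, hxx⟩ := Submodule.mem_span_mul_finite_of_mem_mul
      (hx (Submodule.mem_span_singleton_self x))
    refine ⟨Submodule.span D T, Submodule.span_le.2 hT, ⟨T, rfl⟩, ?_⟩
    rw [Submodule.span_singleton_le_iff_mem]
    rw [← Submodule.span_mul_span] at hxx
    exact mul_le_mul' (Submodule.span_le.2 hS) le_rfl hxx
  · intro M₁ M₂ _ _ h₁ h₂ h
    obtain ⟨N₁, a1, b1, c1⟩ := h₁ (le_sup_left.trans h)
    obtain ⟨N₂, a2, b2, c2⟩ := h₂ (le_sup_right.trans h)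
    exact ⟨N₁ ⊔ N₂, sup_le a1 a2, b1.sup b2, sup_le
      (c1.trans (mul_le_mul' le_rfl le_sup_left))
      (c2.trans (mul_le_mul' le_rfl le_sup_right))⟩

lemma one_le_cl_iff {X : FractionalIdeal D⁰ K} (h0 : X ≠ 0) (h : X ≤ 1) :
    1 ≤ s.cl X ↔ s.star X = 1 := by
  rw [← s.cl_of_ne h0]
  exact ⟨fun h' => le_antisymm (s.cl_le_one h) h', fun h' => h'.ge⟩

lemma exists_inv (hs : s.FiniteCharacter) {X : FractionalIdeal D⁰ K}
    (h : s.star (X * X⁻¹) = 1) (hX : X ≠ 0) (h0 : X * X⁻¹ ≠ 0) :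
    ∃ F, Fin' F ∧ X * F ≤ 1 ∧ 1 ≤ s.cl (X * F) := by
  obtain ⟨G, hG0, hG, hGle, h1⟩ := hs (X * X⁻¹) h0 1 (by rw [h]; exact FractionalIdeal.one_mem_one _)
  have hle : (G : Submodule D K) ≤ (X : Submodule D K) * ((X⁻¹ : FractionalIdeal D⁰ K) : Submodule D K) := by
    rw [← FractionalIdeal.coe_mul]; exact hGle
  obtain ⟨N, hN, hNf, hGN⟩ := fg_le_mul _ hG hle
  let F : FractionalIdeal D⁰ K :=
    ⟨N, FractionalIdeal.isFractional_of_le (J := X⁻¹) hN⟩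
  have hFle : F ≤ X⁻¹ := hN
  have hGF : G ≤ X * F := by
    rw [← FractionalIdeal.coe_le_coe, FractionalIdeal.coe_mul]; exact hGN
  refine ⟨F, hNf, (mul_le_mul_right hFle X).trans FractionalIdeal.mul_one_div_le_one, ?_⟩
  refine le_trans ?_ (s.cl_mono hGF)
  rw [s.cl_of_ne hG0, FractionalIdeal.one_le]
  exact h1

lemma invertible_of {X F : FractionalIdeal D⁰ K} (hX : X ≠ 0) (h1 : X * F ≤ 1)
    (h2 : 1 ≤ s.cl (X * F)) : s.star (X * X⁻¹) = 1 := by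
  have hF : F ≤ X⁻¹ := by
    rw [FractionalIdeal.inv_eq, FractionalIdeal.le_div_iff_mul_le hX, mul_comm]; exact h1
  have hle : X * F ≤ X * X⁻¹ := mul_le_mul_right hF X
  have h3 := h2.trans (s.cl_mono hle)
  have h0 : X * X⁻¹ ≠ 0 := by
    intro h0
    rw [h0, cl_zero] at h3
    exact one_ne_zero (le_antisymm h3 zero_le)
  exact (one_le_cl_iff h0 FractionalIdeal.mul_one_div_le_one).1 h3

/-- the ideal attached to the closure of an integral f.g. fractional ideal -/
lemma exists_ideal {A : FractionalIdeal D⁰ K} (hA : Fin' A) (hA1 : A ≤ 1) (h0 : A ≠ 0) :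
    ∃ B : Ideal D, (B : FractionalIdeal D⁰ K) = s.cl A ∧ s.IsStarIdeal B ∧
      s.IsFiniteTypeStarIdeal B := by
  obtain ⟨B, hB⟩ := FractionalIdeal.le_one_iff_exists_coeIdeal.1 (s.cl_le_one hA1)
  obtain ⟨A', rfl⟩ := FractionalIdeal.le_one_iff_exists_coeIdeal.1 hA1
  have hB0 : (B : FractionalIdeal D⁰ K) ≠ 0 := by rw [hB]; exact s.cl_ne_zero h0
  refine ⟨B, hB, ⟨FractionalIdeal.coeIdeal_ne_zero.1 hB0, ?_⟩, A',
    FractionalIdeal.coeIdeal_ne_zero.1 h0, fin'_coe.1 hA, ?_⟩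
  · rw [← s.cl_of_ne hB0, hB, s.cl_idem]
  · rw [← s.cl_of_ne h0, hB]

lemma IsSuperHomog.exists_SH (hs : s.FiniteCharacter) {I : Ideal D} (hI : s.IsSuperHomog I) :
    ∃ H : FractionalIdeal D⁰ K, H ≠ 0 ∧ s.cl H = (I : FractionalIdeal D⁰ K) ∧ s.SH H := by
  obtain ⟨⟨hne, hst, ⟨G, hG0, hG, hGI⟩, hh⟩, hinv⟩ := hI
  have h0 : (G : FractionalIdeal D⁰ K) ≠ 0 := FractionalIdeal.coeIdeal_ne_zero.2 hG0
  have hcl : s.cl (G : FractionalIdeal D⁰ K) = (I : FractionalIdeal D⁰ K) := by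
    rw [s.cl_of_ne h0, hGI]
  have nz : ∀ A : FractionalIdeal D⁰ K, (G : FractionalIdeal D⁰ K) ≤ s.cl A → A ≠ 0 := by
    rintro A h rfl
    rw [cl_zero] at h
    exact h0 (le_antisymm h zero_le)
  have top : ∀ (A : FractionalIdeal D⁰ K) (B : Ideal D), (B : FractionalIdeal D⁰ K) = s.cl A →
      ¬ 1 ≤ s.cl A → B ≠ ⊤ := by
    rintro A B h h' rfl
    rw [← h, FractionalIdeal.coeIdeal_top] at h'
    exact h' le_rfl
  have le : ∀ (A : FractionalIdeal D⁰ K) (B : Ideal D), (B : FractionalIdeal D⁰ K) = s.cl A →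
      (G : FractionalIdeal D⁰ K) ≤ s.cl A → I ≤ B := by
    intro A B h h'
    rw [← FractionalIdeal.coeIdeal_le_coeIdeal K, h, ← hcl]
    exact s.cl_le h'
  refine ⟨G, h0, hcl, ⟨fin'_coe.2 hG, FractionalIdeal.coeIdeal_le_one, ?_, ?_⟩, ?_⟩
  · intro h
    rw [hcl] at h
    have := le_antisymm FractionalIdeal.coeIdeal_le_one h
    rw [FractionalIdeal.coeIdeal_eq_one, Ideal.one_eq_top] at this
    exact hne this
  · intro A B hA hB hA1 hB1 hGA hGB hAB
    by_contra hcon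
    push Not at hcon
    obtain ⟨A', eA, sA, fA⟩ := exists_ideal (s := s) hA hA1 (nz A hGA)
    obtain ⟨B', eB, sB, fB⟩ := exists_ideal (s := s) hB hB1 (nz B hGB)
    refine hh A' B' (top A A' eA hcon.1) (top B B' eB hcon.2) sA sB fA fB (le A A' eA hGA)
      (le B B' eB hGB) ?_
    have hn : ((A' + B' : Ideal D) : FractionalIdeal D⁰ K) ≠ 0 := by
      rw [FractionalIdeal.coeIdeal_ne_zero]
      intro hb
      exact sA.1 (le_bot_iff.1 (hb ▸ (le_sup_left : A' ≤ A' ⊔ B')))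
    rw [← one_le_cl_iff hn FractionalIdeal.coeIdeal_le_one]
    refine hAB.trans (s.cl_mono ?_)
    rw [Submodule.add_eq_sup, FractionalIdeal.coeIdeal_sup, eA, eB]
    exact add_le_add (s.le_cl A) (s.le_cl B)
  · intro A hA hA1 hGA
    obtain ⟨A', eA, sA, fA⟩ := exists_ideal (s := s) hA hA1 (nz A hGA)
    have h1 := hinv A' sA fA (le A A' eA hGA)
    unfold StarInvertible at h1
    have hA0 : (A' : FractionalIdeal D⁰ K) ≠ 0 := FractionalIdeal.coeIdeal_ne_zero.2 sA.1
    have hinv0 : (A' : FractionalIdeal D⁰ K) * (A' : FractionalIdeal D⁰ K)⁻¹ ≠ 0 := by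
      refine fi_mul_ne_zero hA0 ?_
      intro hz
      have : (1 : FractionalIdeal D⁰ K) ≤ (A' : FractionalIdeal D⁰ K)⁻¹ := by
        rw [FractionalIdeal.inv_eq, FractionalIdeal.le_div_iff_mul_le hA0, one_mul]
        exact FractionalIdeal.coeIdeal_le_one
      rw [hz] at this
      exact one_ne_zero (le_antisymm this zero_le)
    obtain ⟨F, hF, f1, f2⟩ := exists_inv hs h1 hA0 hinv0
    rw [eA] at f1 f2
    exact ⟨F, hF, (mul_le_mul_left (s.le_cl A) F).trans f1, f2.trans (s.cl_le (s.cl_mul A F))⟩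

lemma SH.isSuperHomog {H : FractionalIdeal D⁰ K} (h0 : H ≠ 0) (hH : s.SH H) {L : Ideal D}
    (hL : (L : FractionalIdeal D⁰ K) = s.cl H) : s.IsSuperHomog L := by
  have gen : ∀ A : Ideal D, s.IsFiniteTypeStarIdeal A → L ≤ A → ∃ G : FractionalIdeal D⁰ K,
      G ≠ 0 ∧ Fin' G ∧ G ≤ 1 ∧ s.cl G = (A : FractionalIdeal D⁰ K) ∧ H ≤ s.cl G := by
    rintro A ⟨G, hG0, hG, hGA⟩ hle
    have h0' : (G : FractionalIdeal D⁰ K) ≠ 0 := FractionalIdeal.coeIdeal_ne_zero.2 hG0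
    rw [← s.cl_of_ne h0'] at hGA
    refine ⟨G, h0', fin'_coe.2 hG, FractionalIdeal.coeIdeal_le_one, hGA, ?_⟩
    rw [hGA]
    refine (s.le_cl H).trans ?_
    rw [← hL, FractionalIdeal.coeIdeal_le_coeIdeal K]
    exact hle
  have top : ∀ A : Ideal D, A ≠ ⊤ → ¬ (1 : FractionalIdeal D⁰ K) ≤ A := by
    intro A hA h
    have := le_antisymm FractionalIdeal.coeIdeal_le_one h
    rw [FractionalIdeal.coeIdeal_eq_one, Ideal.one_eq_top] at this
    exact hA this
  obtain ⟨L', eL, sL, fL⟩ := exists_ideal (s := s) hH.fg hH.le_one h0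
  have : L' = L := FractionalIdeal.coeIdeal_injective (K := K) (eL.trans hL.symm)
  subst this
  refine ⟨⟨?_, sL, fL, ?_⟩, ?_⟩
  · rintro rfl
    apply hH.proper
    rw [← hL, FractionalIdeal.coeIdeal_top]
  · intro A B hA hB sA sB fA fB hLA hLB hfull
    obtain ⟨X, hX0, hX, hX1, eX, hHX⟩ := gen A fA hLA
    obtain ⟨Y, hY0, hY, hY1, eY, hHY⟩ := gen B fB hLB
    have hn : ((A + B : Ideal D) : FractionalIdeal D⁰ K) ≠ 0 := by
      rw [FractionalIdeal.coeIdeal_ne_zero]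
      intro hb
      exact sA.1 (le_bot_iff.1 (hb ▸ (le_sup_left : A ≤ A ⊔ B)))
    rw [← one_le_cl_iff hn FractionalIdeal.coeIdeal_le_one, Submodule.add_eq_sup,
      FractionalIdeal.coeIdeal_sup, ← eX, ← eY] at hfull
    rcases hH.hom X Y hX hY hX1 hY1 hHX hHY (hfull.trans (s.cl_le
      (add_le_fi (s.cl_mono le_self_add) (s.cl_mono le_add_self)))) with h | h
    · rw [eX] at h; exact top A hA h
    · rw [eY] at h; exact top B hB h
  · intro A sA fA hLA
    obtain ⟨X, hX0, hX, hX1, eX, hHX⟩ := gen A fA hLA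
    obtain ⟨F, hF, f1, f2⟩ := hH.inv X hX hX1 hHX
    refine invertible_of (F := F) (FractionalIdeal.coeIdeal_ne_zero.2 sA.1) ?_ ?_
    · rw [← eX]; exact (s.cl_mul X F).trans (s.cl_le_one f1)
    · rw [← eX]; exact f2.trans (s.cl_mono (mul_le_mul_left (s.le_cl X) F))

lemma not_full_span {I : Ideal D} {H : FractionalIdeal D⁰ K} (h0 : H ≠ 0)
    (hcl : s.cl H = (I : FractionalIdeal D⁰ K)) (hH : s.SH H) (T : Finset D)
    (hT : ∀ x ∈ T, x ∈ s.MSet I) :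
    ¬ 1 ≤ s.cl (H + ((Ideal.span (T : Set D) : Ideal D) : FractionalIdeal D⁰ K)) := by
  classical
  have hI0 : I ≠ ⊥ := by
    rw [← FractionalIdeal.coeIdeal_ne_zero (K := K), ← hcl]; exact s.cl_ne_zero h0
  have fgspan : ∀ T : Finset D,
      Fin' ((Ideal.span (T : Set D) : Ideal D) : FractionalIdeal D⁰ K) :=
    fun T => fin'_coe.2 ⟨T, rfl⟩
  induction T using Finset.induction_on with
  | empty =>
    simpa using hH.proper
  | insert x T hx ih =>
    intro hfull
    have hxM := hT x (Finset.mem_insert_self x T)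
    have ih' := ih (fun y hy => hT y (Finset.mem_insert_of_mem hy))
    have hxf : Fin' ((Ideal.span {x} : Ideal D) : FractionalIdeal D⁰ K) := by
      simpa using fgspan {x}
    rcases hH.hom (H + ((Ideal.span {x} : Ideal D) : FractionalIdeal D⁰ K))
      (H + ((Ideal.span (T : Set D) : Ideal D) : FractionalIdeal D⁰ K))
      (hH.fg.add hxf) (hH.fg.add (fgspan T))
      (add_le_fi hH.le_one FractionalIdeal.coeIdeal_le_one)
      (add_le_fi hH.le_one FractionalIdeal.coeIdeal_le_one)
      (le_self_add.trans (s.le_cl _)) (le_self_add.trans (s.le_cl _))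
      (hfull.trans (s.cl_mono (by
        rw [Finset.coe_insert, Ideal.span_insert, FractionalIdeal.coeIdeal_sup]
        refine add_le_fi (le_self_add.trans le_self_add) (add_le_add le_add_self le_add_self))))
      with h | h
    · apply hxM
      have hn : ((Ideal.span {x} + I : Ideal D) : FractionalIdeal D⁰ K) ≠ 0 := by
        rw [FractionalIdeal.coeIdeal_ne_zero]
        intro hb
        exact hI0 (le_bot_iff.1 (hb ▸ (le_sup_right : I ≤ Ideal.span {x} ⊔ I)))
      rw [← one_le_cl_iff hn FractionalIdeal.coeIdeal_le_one, Submodule.add_eq_sup,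
        FractionalIdeal.coeIdeal_sup, ← hcl]
      refine h.trans (s.cl_mono (add_le_fi ((s.le_cl H).trans le_add_self) le_self_add))
    · exact ih' h

end Helpers

end StarOperation

/-- Let `I` be `*`-super homogeneous with `M = M(I)`, and `J` a `*`-super
homogeneous ideal with `J ⊆ M`. Then (a) `I ⊆ J^*` or `J ⊆ I^*`, and (b) `(IJ)^*` is a
`*`-super homogeneous ideal. -/
theorem superHomog_comparable_and_mul {D K : Type*} [CommRing D] [IsDomain D] [Field K]
    [Algebra D K] [IsFractionRing D K] (s : StarOperation D K) (hs : s.FiniteCharacter)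
    (I : Ideal D) (hI : s.IsSuperHomog I) (M : Ideal D) (hM : (M : Set D) = s.MSet I)
    (J : Ideal D) (hJ : s.IsSuperHomog J) (hJM : J ≤ M) :
    ((I : FractionalIdeal D⁰ K) ≤ s.star (J : FractionalIdeal D⁰ K) ∨
      (J : FractionalIdeal D⁰ K) ≤ s.star (I : FractionalIdeal D⁰ K)) ∧
    ∃ L : Ideal D,
      (L : FractionalIdeal D⁰ K) = s.star ((I * J : Ideal D) : FractionalIdeal D⁰ K) ∧
      s.IsSuperHomog L := by
  have hJstar := hJ.1.2.1
  obtain ⟨H, hH0, eH, hH⟩ := hI.exists_SH hs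
  obtain ⟨G, hG0, eG, hG⟩ := hJ.exists_SH hs
  have hI0 : (I : FractionalIdeal D⁰ K) ≠ 0 := by rw [← eH]; exact s.cl_ne_zero hH0
  have hJ0 : (J : FractionalIdeal D⁰ K) ≠ 0 := by rw [← eG]; exact s.cl_ne_zero hG0
  have hC : ¬ 1 ≤ s.cl (H + G) := by
    obtain ⟨G', rfl⟩ := FractionalIdeal.le_one_iff_exists_coeIdeal.1 hG.le_one
    obtain ⟨T, hT⟩ := StarOperation.fin'_coe.1 hG.fg
    rw [← hT]
    refine StarOperation.not_full_span hH0 eH hH T ?_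
    intro x hx
    rw [← hM]
    apply hJM
    have h1 : G' ≤ J := by
      rw [← FractionalIdeal.coeIdeal_le_coeIdeal K, ← eG]
      exact s.le_cl _
    apply h1
    rw [← hT]
    exact Submodule.subset_span hx
  refine ⟨?_, ?_⟩
  · rw [← s.cl_of_ne hI0, ← s.cl_of_ne hJ0, ← eH, ← eG, s.cl_idem, s.cl_idem]
    rcases hH.comparable hG hC with h | h
    · exact Or.inl (s.cl_le h)
    · exact Or.inr (s.cl_le h)
  · have h0 : H * G ≠ 0 := StarOperation.fi_mul_ne_zero hH0 hG0
    have hL := hH.mul hG hC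
    obtain ⟨L, hLe⟩ := FractionalIdeal.le_one_iff_exists_coeIdeal.1 (s.cl_le_one hL.le_one)
    refine ⟨L, ?_, hL.isSuperHomog h0 hLe⟩
    rw [FractionalIdeal.coeIdeal_mul, ← s.cl_of_ne (StarOperation.fi_mul_ne_zero hI0 hJ0), hLe, ← eH, ← eG]
    exact le_antisymm (s.cl_mono (mul_le_mul' (s.le_cl H) (s.le_cl G))) (s.cl_le (s.cl_mul_cl H G))
end

section
/- D is a *-super SH domain of type 1 (i.e., for every nonzero nonunit x of D, xD is expressible as a *-product of finitely many ideals that are both *-super homogeneous and *-homogeneous of type 1) if and only if D is a *-IRKT in which every maximal *-ideal has height 1 (a *-generalized Krull domain). -/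
open scoped nonZeroDivisors

namespace StarOperation

variable {D K : Type*} [CommRing D] [IsDomain D] [Field K] [Algebra D K] [IsFractionRing D K]

/-- `D` is a `*`-independent ring of Krull type: localizations at maximal `*`-ideals are
valuation domains, `D` is the locally finite intersection of these localizations (inside
`K`), and no two distinct maximal `*`-ideals contain a common nonzero prime ideal. -/
def IsIRKT (s : StarOperation D K) : Prop :=
  (∀ (P : Ideal D) [P.IsPrime], s.IsMaxStarIdeal P →
    ValuationRing (Localization.AtPrime P)) ∧
  (∀ x : K, (∀ P : Ideal D, s.IsMaxStarIdeal P →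
      ∃ a t : D, t ∉ P ∧ x * algebraMap D K t = algebraMap D K a) →
    ∃ d : D, algebraMap D K d = x) ∧
  s.FiniteStarCharacter ∧
  (∀ P Q : Ideal D, s.IsMaxStarIdeal P → s.IsMaxStarIdeal Q → P ≠ Q →
    ∀ L : Ideal D, L.IsPrime → L ≠ ⊥ → ¬(L ≤ P ⊓ Q))

end StarOperation

namespace StarOperation

variable {D K : Type*} [CommRing D] [IsDomain D] [Field K] [Algebra D K] [IsFractionRing D K]

/-- A `*`-homogeneous ideal `I` is of type 1 if for every nonzero `x ∈ M(I)` there is a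
positive integer `n` with `xⁿD_{M(I)} ∩ D ⊆ I`. -/
def IsHomogType1 (s : StarOperation D K) (I : Ideal D) : Prop :=
  s.IsHomog I ∧
    ∀ (M : Ideal D) [M.IsPrime], (M : Set D) = s.MSet I →
      ∀ x ∈ M, x ≠ (0 : D) → ∃ n : ℕ, 0 < n ∧
        Ideal.comap (algebraMap D (Localization.AtPrime M))
          (Ideal.map (algebraMap D (Localization.AtPrime M)) (Ideal.span {x ^ n})) ≤ I

end StarOperation

set_option linter.unusedSectionVars false

namespace StarOperation

variable {D K : Type*} [CommRing D] [IsDomain D] [Field K] [Algebra D K] [IsFractionRing D K]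
variable (s : StarOperation D K)

lemma aux_star_one : s.star 1 = 1 := by
  have := s.star_spanSingleton 1 one_ne_zero
  simpa using this

lemma aux_ne {I : Ideal D} (h : I ≠ ⊥) : (I : FractionalIdeal D⁰ K) ≠ 0 :=
  FractionalIdeal.coeIdeal_ne_zero.mpr h

/-- the star closure at the level of integral ideals -/
lemma aux_exists_st (I : Ideal D) : ∃ J : Ideal D, I ≠ ⊥ →
    (J : FractionalIdeal D⁰ K) = s.star (I : FractionalIdeal D⁰ K) := by
  by_cases h : I = ⊥
  · exact ⟨⊥, fun h' => absurd h h'⟩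
  · have h1 : s.star (I : FractionalIdeal D⁰ K) ≤ 1 := by
      rw [← s.aux_star_one]
      exact s.star_mono _ _ (aux_ne h) one_ne_zero FractionalIdeal.coeIdeal_le_one
    obtain ⟨J, hJ⟩ := FractionalIdeal.le_one_iff_exists_coeIdeal.mp h1
    exact ⟨J, fun _ => hJ⟩

/-- the star closure at the level of integral ideals -/
noncomputable def st (I : Ideal D) : Ideal D := (s.aux_exists_st I).choose

variable {s}

lemma coe_st {I : Ideal D} (h : I ≠ ⊥) :
    (s.st I : FractionalIdeal D⁰ K) = s.star (I : FractionalIdeal D⁰ K) :=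
  (s.aux_exists_st I).choose_spec h

lemma le_st {I : Ideal D} (h : I ≠ ⊥) : I ≤ s.st I := by
  rw [← FractionalIdeal.coeIdeal_le_coeIdeal K, coe_st h]
  exact s.le_star _ (aux_ne h)

lemma ne_bot_of_le {I J : Ideal D} (h : I ≠ ⊥) (hIJ : I ≤ J) : J ≠ ⊥ := by
  rintro rfl
  exact h (le_bot_iff.mp hIJ)

lemma st_ne {I : Ideal D} (h : I ≠ ⊥) : s.st I ≠ ⊥ := ne_bot_of_le h (le_st h)

lemma st_mono {I J : Ideal D} (h : I ≠ ⊥) (hIJ : I ≤ J) : s.st I ≤ s.st J := by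
  rw [← FractionalIdeal.coeIdeal_le_coeIdeal K, coe_st h, coe_st (ne_bot_of_le h hIJ)]
  exact s.star_mono _ _ (aux_ne h) (aux_ne (ne_bot_of_le h hIJ))
    ((FractionalIdeal.coeIdeal_le_coeIdeal K).mpr hIJ)

lemma isStarIdeal_st {I : Ideal D} (h : I ≠ ⊥) : s.IsStarIdeal (s.st I) := by
  refine ⟨st_ne h, ?_⟩
  rw [coe_st h, s.star_idem _ (aux_ne h)]

lemma IsStarIdeal.st_eq {I : Ideal D} (h : s.IsStarIdeal I) : s.st I = I := by
  rw [← FractionalIdeal.coeIdeal_inj (K := K), coe_st h.1, h.2]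

lemma isStarIdeal_of_st_le {I : Ideal D} (h : I ≠ ⊥) (h' : s.st I ≤ I) : s.IsStarIdeal I := by
  refine ⟨h, ?_⟩
  rw [← coe_st h, le_antisymm h' (le_st h)]

lemma st_le {I J : Ideal D} (h : I ≠ ⊥) (hJ : s.IsStarIdeal J) (hIJ : I ≤ J) : s.st I ≤ J := by
  rw [← hJ.st_eq]; exact st_mono h hIJ

lemma star_eq_one_iff {I : Ideal D} (h : I ≠ ⊥) :
    s.star (I : FractionalIdeal D⁰ K) = 1 ↔ s.st I = ⊤ := by
  rw [← coe_st h, ← FractionalIdeal.coeIdeal_top (S := D⁰) (P := K), FractionalIdeal.coeIdeal_inj]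

lemma isStarIdeal_span {x : D} (hx : x ≠ 0) : s.IsStarIdeal (Ideal.span {x}) := by
  refine ⟨by simpa using hx, ?_⟩
  rw [FractionalIdeal.coeIdeal_span_singleton]
  exact s.star_spanSingleton _ (by simpa using hx)

lemma isFT_iff {I : Ideal D} : s.IsFiniteTypeStarIdeal I ↔
    ∃ J : Ideal D, J ≠ ⊥ ∧ J.FG ∧ s.st J = I := by
  unfold IsFiniteTypeStarIdeal
  refine exists_congr fun J => and_congr_right fun h => and_congr_right fun _ => ?_
  rw [← coe_st h, FractionalIdeal.coeIdeal_inj]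

lemma smul_mem_of_st {A B : Ideal D} {b d : D} (hA : A ≠ ⊥) (hB : s.IsStarIdeal B)
    (h : ∀ a ∈ A, b * a ∈ B) (hd : d ∈ s.st A) : b * d ∈ B := by
  by_cases hb : b = 0
  · simp [hb]
  have hb' : algebraMap D K b ≠ 0 := by simpa using hb
  have hne : Ideal.span {b} * A ≠ ⊥ := by
    simp [hb, hA]
  have h1 : Ideal.span {b} * A ≤ B := Ideal.span_singleton_mul_le_iff.mpr h
  have h2 := st_le hne hB h1
  have h3 : s.st (Ideal.span {b} * A) = Ideal.span {b} * s.st A := by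
    rw [← FractionalIdeal.coeIdeal_inj (K := K), coe_st hne, FractionalIdeal.coeIdeal_mul,
      FractionalIdeal.coeIdeal_mul, coe_st hA, FractionalIdeal.coeIdeal_span_singleton,
      s.star_smul _ _ hb' (aux_ne hA)]
  rw [h3] at h2
  exact h2 (Ideal.mem_span_singleton_mul.mpr ⟨d, hd, rfl⟩)

lemma fin_char (hs : s.FiniteCharacter) {I : Ideal D} (h : I ≠ ⊥) {x : D} (hx : x ∈ s.st I) :
    ∃ J : Ideal D, J ≠ ⊥ ∧ J.FG ∧ J ≤ I ∧ x ∈ s.st J := by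
  have hx' : algebraMap D K x ∈ s.star (I : FractionalIdeal D⁰ K) := by
    rw [← coe_st h]; exact FractionalIdeal.mem_coeIdeal_of_mem _ hx
  obtain ⟨J, hJ0, hJfg, hJI, hxJ⟩ := hs _ (aux_ne h) _ hx'
  obtain ⟨J', rfl⟩ := FractionalIdeal.le_one_iff_exists_coeIdeal.mp
    (hJI.trans FractionalIdeal.coeIdeal_le_one)
  have hJ' : J' ≠ ⊥ := FractionalIdeal.coeIdeal_ne_zero.mp hJ0
  refine ⟨J', hJ', ?_, (FractionalIdeal.coeIdeal_le_coeIdeal K).mp hJI, ?_⟩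
  · exact (FractionalIdeal.coeIdeal_fg D⁰ (IsFractionRing.injective D K) J').mp hJfg
  · rw [← coe_st hJ', FractionalIdeal.mem_coeIdeal] at hxJ
    obtain ⟨y, hy, hyx⟩ := hxJ
    rwa [← IsFractionRing.injective D K hyx]

lemma exists_max (hs : s.FiniteCharacter) {I : Ideal D} (hI : s.IsStarIdeal I) (hI' : I ≠ ⊤) :
    ∃ P, s.IsMaxStarIdeal P ∧ I ≤ P := by
  obtain ⟨P, hIP, hP⟩ := zorn_le_nonempty₀ {J : Ideal D | s.IsStarIdeal J ∧ J ≠ ⊤} (by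
    intro c hc hchain y hy
    have hdir : DirectedOn (· ≤ ·) c := hchain.directedOn
    have hne : c.Nonempty := ⟨y, hy⟩
    have hbot : sSup c ≠ ⊥ := ne_bot_of_le (hc hy).1.1 (le_sSup hy)
    refine ⟨sSup c, ⟨isStarIdeal_of_st_le hbot ?_, ?_⟩, fun z hz => le_sSup hz⟩
    · intro x hx
      obtain ⟨J, hJ0, hJfg, hJle, hxJ⟩ := fin_char hs hbot hx
      have hcomp := (Submodule.fg_iff_compact J).mp hJfg
      obtain ⟨z, hz, hJz⟩ := (CompleteLattice.isCompactElement_iff_le_of_directed_sSup_le _ _).mp hcomp _ hne hdir hJle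
      exact le_sSup hz (st_le hJ0 (hc hz).1 hJz hxJ)
    · rw [Ne, Ideal.eq_top_iff_one, Submodule.mem_sSup_of_directed hne hdir]
      rintro ⟨z, hz, h1⟩
      exact (hc hz).2 ((Ideal.eq_top_iff_one z).mpr h1)) I ⟨hI, hI'⟩
  refine ⟨P, ⟨hP.prop.2, hP.prop.1, fun J hJ hJs hPJ => ?_⟩, hIP⟩
  exact le_antisymm (hP.le_of_ge ⟨hJs, hJ⟩ hPJ) hPJ

lemma IsMaxStarIdeal.ne_bot {P : Ideal D} (hP : s.IsMaxStarIdeal P) : P ≠ ⊥ := hP.2.1.1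

lemma IsMaxStarIdeal.st_sup {P A : Ideal D} (hP : s.IsMaxStarIdeal P) (hA : ¬ A ≤ P) :
    s.st (A ⊔ P) = ⊤ := by
  by_contra h
  have hne : A ⊔ P ≠ ⊥ := ne_bot_of_le hP.ne_bot le_sup_right
  have := hP.2.2 _ h (isStarIdeal_st hne) (le_sup_right.trans (le_st hne))
  exact hA (this ▸ le_sup_left.trans (le_st hne))

lemma IsMaxStarIdeal.isPrime {P : Ideal D} (hP : s.IsMaxStarIdeal P) : P.IsPrime := by
  refine ⟨hP.1, fun {a b} hab => ?_⟩
  by_contra! hcon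
  have h1 := hP.st_sup (A := Ideal.span {a}) (by
    rw [Ideal.span_singleton_le_iff_mem]; exact hcon.1)
  have hne : Ideal.span {a} ⊔ P ≠ ⊥ := ne_bot_of_le hP.ne_bot le_sup_right
  have : b * 1 ∈ P := by
    refine smul_mem_of_st (s := s) (A := Ideal.span {a} ⊔ P) hne hP.2.1 ?_ (h1 ▸ trivial)
    intro z hz
    obtain ⟨u, hu, v, hv, rfl⟩ := Submodule.mem_sup.mp hz
    obtain ⟨w, rfl⟩ := Ideal.mem_span_singleton'.mp hu
    rw [mul_add]
    refine P.add_mem ?_ (P.mul_mem_left _ hv)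
    have : b * (w * a) = w * (a * b) := by ring
    rw [this]; exact P.mul_mem_left _ hab
  exact hcon.2 (by simpa using this)

/-- local-global principle -/
lemma local_global (hs : s.FiniteCharacter) {B : Ideal D} (hB : s.IsStarIdeal B) {d : D}
    (h : ∀ P, s.IsMaxStarIdeal P → ∃ t, t ∉ P ∧ t * d ∈ B) : d ∈ B := by
  let A : Ideal D := Submodule.comap (LinearMap.toSpanSingleton D D d) B
  have hmem : ∀ t, t ∈ A ↔ t * d ∈ B := fun t => by simp [A]
  have hBA : B ≤ A := fun b hb => (hmem b).mpr (B.mul_mem_right _ hb)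
  have hA0 : A ≠ ⊥ := ne_bot_of_le hB.1 hBA
  have hA : s.IsStarIdeal A := by
    refine isStarIdeal_of_st_le hA0 fun t ht => ?_
    rw [hmem, mul_comm]
    exact smul_mem_of_st hA0 hB (fun a ha => by rw [mul_comm]; exact (hmem a).mp ha) ht
  have : A = ⊤ := by
    by_contra hne
    obtain ⟨P, hP, hAP⟩ := exists_max hs hA hne
    obtain ⟨t, ht, htd⟩ := h P hP
    exact ht (hAP ((hmem t).mpr htd))
  have h1 : (1 : D) ∈ A := this ▸ trivial
  simpa using (hmem 1).mp h1

lemma IsHomog.mset_eq (hs : s.FiniteCharacter) {I P : Ideal D} (hI : s.IsHomog I)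
    (hP : s.IsMaxStarIdeal P) (hIP : I ≤ P) : s.MSet I = (P : Set D) := by
  obtain ⟨hItop, hIst, hIft, hh⟩ := hI
  ext x
  have hne : ∀ A : Ideal D, A + I ≠ ⊥ := fun A => ne_bot_of_le hIst.1 le_sup_right
  simp only [MSet, Set.mem_ofPred_eq, Ne, star_eq_one_iff (hne _), SetLike.mem_coe]
  constructor
  · intro hx
    by_contra hxP
    have h1 := hP.st_sup (A := Ideal.span {x}) (by rwa [Ideal.span_singleton_le_iff_mem])
    have hnP : Ideal.span {x} ⊔ P ≠ ⊥ := ne_bot_of_le hP.ne_bot le_sup_right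
    obtain ⟨F, hF0, hFfg, hFle, hF1⟩ := fin_char hs hnP (x := 1) (h1 ▸ trivial)
    -- find a finitely generated subideal of `P`
    obtain ⟨G, hGfg, hGP, hFG⟩ : ∃ G : Ideal D, G.FG ∧ G ≤ P ∧ F ≤ Ideal.span {x} ⊔ G := by
      clear hF1 hF0
      induction F, hFfg using Submodule.fg_induction with
      | singleton y =>
        have hy : y ∈ Ideal.span {x} ⊔ P := hFle (Submodule.mem_span_singleton_self y)
        obtain ⟨u, hu, v, hv, rfl⟩ := Submodule.mem_sup.mp hy
        refine ⟨Ideal.span {v}, ⟨{v}, by simp⟩, by rwa [Ideal.span_singleton_le_iff_mem], ?_⟩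
        rw [Submodule.span_singleton_le_iff_mem]
        exact Submodule.add_mem_sup hu (Ideal.mem_span_singleton_self v)
      | sup F1 F2 _ _ ih1 ih2 =>
        obtain ⟨G1, a1, b1, c1⟩ := ih1 (le_sup_left.trans hFle)
        obtain ⟨G2, a2, b2, c2⟩ := ih2 (le_sup_right.trans hFle)
        refine ⟨G1 ⊔ G2, Submodule.FG.sup a1 a2, sup_le b1 b2, sup_le (c1.trans ?_) (c2.trans ?_)⟩
        · exact sup_le_sup_left le_sup_left _
        · exact sup_le_sup_left le_sup_right _
    obtain ⟨I0, hI0, hI0fg, hI0I⟩ := isFT_iff.mp hIft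
    have hI0le : I0 ≤ I := hI0I ▸ le_st hI0
    have hn1 : G ⊔ I0 ≠ ⊥ := ne_bot_of_le hI0 le_sup_right
    have hn2 : Ideal.span {x} ⊔ I0 ≠ ⊥ := ne_bot_of_le hI0 le_sup_right
    have hJP : s.st (G ⊔ I0) ≤ P := st_le hn1 hP.2.1 (sup_le hGP (hI0le.trans hIP))
    have hnJ : s.st (G ⊔ I0) + s.st (Ideal.span {x} ⊔ I0) ≠ ⊥ :=
      ne_bot_of_le (st_ne hn1) le_sup_left
    refine hh (s.st (G ⊔ I0)) (s.st (Ideal.span {x} ⊔ I0)) ?_ ?_ (isStarIdeal_st hn1)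
      (isStarIdeal_st hn2) (isFT_iff.mpr ⟨_, hn1, Submodule.FG.sup hGfg hI0fg, rfl⟩)
      (isFT_iff.mpr ⟨_, hn2, Submodule.FG.sup ⟨{x}, by simp⟩ hI0fg, rfl⟩) ?_ ?_
      ((star_eq_one_iff hnJ).mpr ?_)
    · intro h; rw [h] at hJP; exact hP.1 (top_le_iff.mp hJP)
    · intro h
      refine hx (top_le_iff.mp (h ▸ st_mono hn2 ?_))
      exact sup_le_sup_left hI0le _
    · rw [← hI0I]; exact st_mono hI0 le_sup_right
    · rw [← hI0I]; exact st_mono hI0 le_sup_right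
    · rw [Ideal.eq_top_iff_one]
      refine st_mono hF0 (hFG.trans ?_) hF1
      exact sup_le ((le_sup_left.trans (le_st hn2)).trans le_sup_right)
        ((le_sup_left.trans (le_st hn1)).trans le_sup_left)
  · intro hxP h
    have : s.st (Ideal.span {x} + I) ≤ P := st_le (hne _) hP.2.1
      (sup_le (by rwa [Ideal.span_singleton_le_iff_mem]) hIP)
    rw [h] at this
    exact hP.1 (top_le_iff.mp this)

end StarOperation

namespace StarOperation

section loc
variable {D : Type*} [CommRing D] [IsDomain D]

/-- divisibility in the localization at `P` -/
def Dv (P : Ideal D) (x y : D) : Prop := ∃ t, t ∉ P ∧ x ∣ t * y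

lemma mem_map_iff_dv {P : Ideal D} [P.IsPrime] {x z : D} :
    algebraMap D (Localization.AtPrime P) z ∈
      Ideal.map (algebraMap D (Localization.AtPrime P)) (Ideal.span {x}) ↔ Dv P x z := by
  rw [IsLocalization.mem_map_algebraMap_iff P.primeCompl]
  constructor
  · rintro ⟨⟨⟨a, ha⟩, ⟨t, ht⟩⟩, h⟩
    rw [← map_mul] at h
    have h' := IsLocalization.injective (Localization.AtPrime P)
      P.primeCompl_le_nonZeroDivisors h
    refine ⟨t, ht, ?_⟩
    simp only at h'
    rw [mul_comm, h']
    exact Ideal.mem_span_singleton.mp ha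
  · rintro ⟨t, ht, h⟩
    refine ⟨⟨⟨t * z, Ideal.mem_span_singleton.mpr h⟩, ⟨t, ht⟩⟩, ?_⟩
    simp [mul_comm]

lemma valuationRing_iff {P : Ideal D} [P.IsPrime] :
    ValuationRing (Localization.AtPrime P) ↔ ∀ a b : D, Dv P a b ∨ Dv P b a := by
  have key : ∀ a b : D, Dv P a b ↔ algebraMap D (Localization.AtPrime P) a ∣
      algebraMap D (Localization.AtPrime P) b := by
    intro a b
    rw [← mem_map_iff_dv, Ideal.map_span, Set.image_singleton, Ideal.mem_span_singleton]
  rw [ValuationRing.iff_dvd_total]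
  constructor
  · intro h a b
    rw [key, key]
    exact h.total _ _
  · intro h
    refine ⟨fun u v => ?_⟩
    obtain ⟨⟨a, t⟩, ha⟩ := IsLocalization.surj P.primeCompl u
    obtain ⟨⟨b, r⟩, hb⟩ := IsLocalization.surj P.primeCompl v
    have hu1 : IsUnit (algebraMap D (Localization.AtPrime P) t) :=
      IsLocalization.map_units _ t
    have hu2 : IsUnit (algebraMap D (Localization.AtPrime P) r) :=
      IsLocalization.map_units _ r
    have := h a b
    rw [key, key, ← ha, ← hb] at this
    simpa [hu1.mul_right_dvd, hu1.dvd_mul_right, hu2.mul_right_dvd, hu2.dvd_mul_right] using this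

lemma fg_local_principal {P : Ideal D} [hP : P.IsPrime] (hv : ∀ a b : D, Dv P a b ∨ Dv P b a)
    {J : Ideal D} (hJ : J.FG) : ∃ j ∈ J, ∃ t, t ∉ P ∧ ∀ y ∈ J, j ∣ t * y := by
  induction J, hJ using Submodule.fg_induction with
  | singleton y =>
    refine ⟨y, Submodule.mem_span_singleton_self y, 1, P.primeCompl.one_mem, fun z hz => ?_⟩
    rw [one_mul]; exact Ideal.mem_span_singleton.mp hz
  | sup J1 J2 _ _ ih1 ih2 =>
    obtain ⟨j1, hj1, t1, ht1, h1⟩ := ih1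
    obtain ⟨j2, hj2, t2, ht2, h2⟩ := ih2
    rcases hv j1 j2 with ⟨t, ht, h⟩ | ⟨t, ht, h⟩
    · refine ⟨j1, Submodule.mem_sup_left hj1, t * (t1 * t2),
        P.primeCompl.mul_mem ht (P.primeCompl.mul_mem ht1 ht2), fun y hy => ?_⟩
      obtain ⟨u, hu, v, hv, rfl⟩ := Submodule.mem_sup.mp hy
      rw [mul_add]
      refine dvd_add ?_ ?_
      · have : t * (t1 * t2) * u = t * t2 * (t1 * u) := by ring
        rw [this]; exact (h1 u hu).mul_left _
      · obtain ⟨w, hw⟩ := h2 v hv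
        have : t * (t1 * t2) * v = (t * j2) * (t1 * w) := by linear_combination (t * t1) * hw
        rw [this]; exact h.mul_right _
    · refine ⟨j2, Submodule.mem_sup_right hj2, t * (t1 * t2),
        P.primeCompl.mul_mem ht (P.primeCompl.mul_mem ht1 ht2), fun y hy => ?_⟩
      obtain ⟨u, hu, v, hv, rfl⟩ := Submodule.mem_sup.mp hy
      rw [mul_add]
      refine dvd_add ?_ ?_
      · obtain ⟨w, hw⟩ := h1 u hu
        have : t * (t1 * t2) * u = (t * j1) * (t2 * w) := by linear_combination (t * t2) * hw
        rw [this]; exact h.mul_right _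
      · have : t * (t1 * t2) * v = t * t1 * (t2 * v) := by ring
        rw [this]; exact (h2 v hv).mul_left _

lemma dv_total_of_triple {P : Ideal D} [hP : P.IsPrime] {c : D} (hc : c ≠ 0)
    (h3 : ∀ a b : D, (Dv P c a ∧ Dv P c b) ∨ Dv P a b ∨ Dv P b a) (N : ℕ) :
    ∀ a b : D, Dv P a (c ^ N) → Dv P a b ∨ Dv P b a := by
  induction N with
  | zero =>
    rintro a b ⟨t, ht, h⟩
    exact Or.inl ⟨t, ht, (by simpa using h : a ∣ t).mul_right _⟩
  | succ N ih =>
    rintro a b ⟨r, hr, h⟩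
    rcases h3 a b with ⟨⟨t1, ht1, a', ha'⟩, ⟨t2, ht2, b', hb'⟩⟩ | h | h
    · have h1 : Dv P (t2 * a') (c ^ N) := by
        refine ⟨t2 * t1 * r, P.primeCompl.mul_mem (P.primeCompl.mul_mem ht2 ht1) hr, ?_⟩
        obtain ⟨w, hw⟩ := h
        refine ⟨w, mul_left_cancel₀ hc ?_⟩
        linear_combination (t2 * t1) * hw + (t2 * w) * ha'
      rcases ih (t2 * a') (t1 * b') h1 with ⟨q, hq, w, hw⟩ | ⟨q, hq, w, hw⟩
      · refine Or.inl ⟨q * t1 * t2, P.primeCompl.mul_mem (P.primeCompl.mul_mem hq ht1) ht2,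
          ⟨t1 * t2 * w, ?_⟩⟩
        linear_combination (q * t1) * hb' - (t2 * w) * ha' + c * hw
      · refine Or.inr ⟨q * t1 * t2, P.primeCompl.mul_mem (P.primeCompl.mul_mem hq ht1) ht2,
          ⟨t1 * t2 * w, ?_⟩⟩
        linear_combination (q * t2) * ha' - (t1 * w) * hb' + c * hw
    · exact Or.inl h
    · exact Or.inr h

lemma height_one_pow {P : Ideal D} [hP : P.IsPrime]
    (h1 : ∀ Q : Ideal D, Q.IsPrime → Q < P → Q = ⊥) {x c : D} (hx : x ≠ 0) (hc : c ∈ P) :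
    ∃ N, Dv P x (c ^ N) := by
  by_contra! hcon
  have hdis : Disjoint ((Ideal.span {x} : Ideal D) : Set D)
      (P.primeCompl ⊔ Submonoid.powers c : Submonoid D) := by
    rw [Set.disjoint_left]
    intro y hy hy'
    obtain ⟨t, ht, z, ⟨N, rfl⟩, rfl⟩ := Submonoid.mem_sup.mp hy'
    exact hcon N ⟨t, ht, Ideal.mem_span_singleton.mp hy⟩
  obtain ⟨Q, hQ, hxQ, hQd⟩ := Ideal.exists_le_prime_disjoint _ _ hdis
  rw [Set.disjoint_left] at hQd
  have hcQ : c ∉ Q := fun h => hQd h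
    ((le_sup_right : Submonoid.powers c ≤ P.primeCompl ⊔ Submonoid.powers c)
      (Submonoid.mem_powers c))
  have hQP : Q ≤ P := fun q hq => by
    by_contra hqP
    exact hQd hq ((le_sup_left : P.primeCompl ≤ P.primeCompl ⊔ Submonoid.powers c) hqP)
  have := h1 Q hQ (lt_of_le_of_ne hQP (by rintro rfl; exact hcQ hc))
  subst this
  exact hx (by simpa using hxQ)

/-- the contraction of the extension of `xD` to the localization at `P` -/
def Cx (x : D) (P : Ideal D) : Ideal D := Ideal.span {d | Dv P x d}

lemma mem_Cx {x : D} {P : Ideal D} [hP : P.IsPrime] {d : D} : d ∈ Cx x P ↔ Dv P x d := by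
  refine ⟨fun h => ?_, fun h => Ideal.subset_span h⟩
  induction h using Submodule.span_induction with
  | mem y hy => exact hy
  | zero => exact ⟨1, P.primeCompl.one_mem, by simp⟩
  | add y z _ _ hy hz =>
    obtain ⟨t, ht, h⟩ := hy
    obtain ⟨r, hr, h'⟩ := hz
    refine ⟨t * r, P.primeCompl.mul_mem ht hr, ?_⟩
    have : t * r * (y + z) = r * (t * y) + t * (r * z) := by ring
    rw [this]
    exact dvd_add (h.mul_left _) (h'.mul_left _)
  | smul a y _ hy =>
    obtain ⟨t, ht, h⟩ := hy
    refine ⟨t, ht, ?_⟩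
    rw [smul_eq_mul, mul_left_comm]
    exact h.mul_left _

end loc

variable {D K : Type*} [CommRing D] [IsDomain D] [Field K] [Algebra D K] [IsFractionRing D K]
variable {s : StarOperation D K}

lemma frac_mul_ne {I J : FractionalIdeal D⁰ K} (hI : I ≠ 0) (hJ : J ≠ 0) : I * J ≠ 0 := by
  rw [Ne, FractionalIdeal.eq_zero_iff] at hI hJ ⊢
  push Not at hI hJ ⊢
  obtain ⟨x, hx, hx0⟩ := hI
  obtain ⟨y, hy, hy0⟩ := hJ
  exact ⟨x * y, FractionalIdeal.mul_mem_mul hx hy, mul_ne_zero hx0 hy0⟩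

/-- A `*`-invertible ideal of finite type is locally principal. -/
lemma inv_local {P J0 : Ideal D} (hP : s.IsMaxStarIdeal P) (hJ0 : J0 ≠ ⊥)
    (hinv : s.StarInvertible (s.st J0)) :
    ∃ k : K, (∀ y ∈ J0, ∃ d : D, k * algebraMap D K y = algebraMap D K d) ∧
      ∃ j ∈ J0, ∃ u : D, u ∉ P ∧ k * algebraMap D K j = algebraMap D K u := by
  have hJ := st_ne (s := s) hJ0
  have hmem : ∀ k ∈ (s.st J0 : FractionalIdeal D⁰ K)⁻¹, ∀ y ∈ s.st J0,
      ∃ d : D, k * algebraMap D K y = algebraMap D K d := by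
    intro k hk y hy
    rw [FractionalIdeal.mem_inv_iff (aux_ne hJ)] at hk
    obtain ⟨d, hd⟩ := (FractionalIdeal.mem_one_iff _).mp
      (hk _ (FractionalIdeal.mem_coeIdeal_of_mem _ hy))
    exact ⟨d, hd.symm⟩
  by_contra! hcon
  have hle : (s.st J0 : FractionalIdeal D⁰ K) * (s.st J0 : FractionalIdeal D⁰ K)⁻¹ ≤
      (P : FractionalIdeal D⁰ K) := by
    rw [FractionalIdeal.mul_le]
    intro y hy k hk
    by_cases hk0 : k = 0
    · simp [hk0, FractionalIdeal.zero_mem]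
    have h1 : FractionalIdeal.spanSingleton D⁰ k * (J0 : FractionalIdeal D⁰ K) ≤
        (P : FractionalIdeal D⁰ K) := by
      intro z hz
      obtain ⟨w, hw, rfl⟩ := FractionalIdeal.mem_singleton_mul.mp hz
      obtain ⟨j, hj, rfl⟩ := (FractionalIdeal.mem_coeIdeal _).mp hw
      obtain ⟨d, hd⟩ := hmem k hk j (le_st hJ0 hj)
      have hdP : d ∈ P := by
        by_contra hdP
        exact hcon k (fun y hy => hmem k hk y (le_st hJ0 hy)) j hj d hdP hd
      rw [hd]
      exact FractionalIdeal.mem_coeIdeal_of_mem _ hdP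
    have h2 := s.star_mono _ _ (frac_mul_ne (FractionalIdeal.spanSingleton_ne_zero_iff.mpr hk0) (aux_ne hJ0))
      (aux_ne hP.ne_bot) h1
    rw [s.star_smul _ _ hk0 (aux_ne hJ0), hP.2.1.2, ← coe_st hJ0] at h2
    rw [mul_comm]
    exact h2 (FractionalIdeal.mem_singleton_mul.mpr ⟨y, hy, rfl⟩)
  have hone : (1 : K) ∈ (s.st J0 : FractionalIdeal D⁰ K)⁻¹ := by
    rw [FractionalIdeal.mem_inv_iff (aux_ne hJ)]
    intro y hy
    rw [one_mul]
    exact FractionalIdeal.coeIdeal_le_one hy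
  have hne : (s.st J0 : FractionalIdeal D⁰ K) * (s.st J0 : FractionalIdeal D⁰ K)⁻¹ ≠ 0 := by
    refine frac_mul_ne (aux_ne hJ) ?_
    intro h
    rw [h] at hone
    exact one_ne_zero ((FractionalIdeal.mem_zero_iff _).mp hone)
  have h3 := s.star_mono _ _ hne (aux_ne hP.ne_bot) hle
  rw [hinv, hP.2.1.2, ← FractionalIdeal.coeIdeal_top, FractionalIdeal.coeIdeal_le_coeIdeal] at h3
  exact hP.1 (top_le_iff.mp h3)

end StarOperation

namespace StarOperation

variable {D K : Type*} [CommRing D] [IsDomain D] [Field K] [Algebra D K] [IsFractionRing D K]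

/-- the left-hand side of the theorem -/
def LHS (s : StarOperation D K) : Prop :=
  ∀ x : D, x ≠ 0 → ¬IsUnit x →
      ∃ T : Multiset (Ideal D), (∀ J ∈ T, s.IsSuperHomog J ∧ s.IsHomogType1 J) ∧
        s.star ((T.prod : Ideal D) : FractionalIdeal D⁰ K) =
          ((Ideal.span {x} : Ideal D) : FractionalIdeal D⁰ K)

variable {s : StarOperation D K}

lemma LHS.prod_le (H : LHS s) {x : D} (hx : x ≠ 0) (hu : ¬ IsUnit x) :
    ∃ T : Multiset (Ideal D), (∀ J ∈ T, s.IsSuperHomog J ∧ s.IsHomogType1 J) ∧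
      T.prod ≤ Ideal.span {x} := by
  obtain ⟨T, hT, h⟩ := H x hx hu
  refine ⟨T, hT, ?_⟩
  have hne : T.prod ≠ ⊥ := by
    intro h0
    have : (⊥ : Ideal D) ∈ T := Multiset.prod_eq_zero_iff.mp h0
    exact (hT _ this).1.1.2.1.1 rfl
  rw [← coe_st hne, FractionalIdeal.coeIdeal_inj] at h
  rw [← h]
  exact le_st hne

lemma LHS.pow (hs : s.FiniteCharacter) (H : LHS s) {P : Ideal D} (hP : s.IsMaxStarIdeal P)
    {x c : D} (hxP : x ∈ P) (hx : x ≠ 0) (hcP : c ∈ P) (hc : c ≠ 0) : ∃ N, Dv P x (c ^ N) := by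
  have hPp := hP.isPrime
  obtain ⟨T, hT, hle⟩ := H.prod_le hx (fun hu => hP.1 (P.eq_top_of_isUnit_mem hxP hu))
  have h1 : ∀ J ∈ T, ∃ N t, t ∉ P ∧ t * c ^ N ∈ J := by
    intro J hJ
    by_cases hJP : J ≤ P
    · obtain ⟨n, -, hn⟩ := (hT J hJ).2.2 P ((hT J hJ).2.1.mset_eq hs hP hJP).symm c hcP hc
      refine ⟨n, 1, P.primeCompl.one_mem, ?_⟩
      rw [one_mul]
      exact hn (Ideal.le_comap_map (Ideal.mem_span_singleton_self _))
    · obtain ⟨t, ht, htP⟩ := Set.not_subset.mp hJP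
      exact ⟨0, t, htP, by simpa using ht⟩
  have h2 : ∃ N t, t ∉ P ∧ t * c ^ N ∈ T.prod := by
    clear hle hT
    induction T using Multiset.induction_on with
    | empty => exact ⟨0, 1, P.primeCompl.one_mem, by simp⟩
    | cons J T ih =>
      obtain ⟨N, t, ht, h⟩ := ih (fun J hJ => h1 J (Multiset.mem_cons_of_mem hJ))
      obtain ⟨N', t', ht', h'⟩ := h1 J (Multiset.mem_cons_self J T)
      refine ⟨N' + N, t' * t, P.primeCompl.mul_mem ht' ht, ?_⟩
      rw [Multiset.prod_cons]
      have : t' * t * c ^ (N' + N) = (t' * c ^ N') * (t * c ^ N) := by ring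
      rw [this]
      exact Ideal.mul_mem_mul h' h
  obtain ⟨N, t, ht, h⟩ := h2
  exact ⟨N, t, ht, Ideal.mem_span_singleton.mp (hle h)⟩

lemma LHS.exists_mem (H : LHS s) {P : Ideal D} (hP : s.IsMaxStarIdeal P) :
    ∃ J : Ideal D, J ≤ P ∧ s.IsSuperHomog J := by
  obtain ⟨x, hxP, hx⟩ := Submodule.exists_mem_ne_zero_of_ne_bot hP.ne_bot
  obtain ⟨T, hT, hle⟩ := H.prod_le hx (fun hu => hP.1 (P.eq_top_of_isUnit_mem hxP hu))
  obtain ⟨J, hJ, hJP⟩ := hP.isPrime.multiset_prod_le.mp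
    (hle.trans ((Ideal.span_singleton_le_iff_mem P).mpr hxP))
  exact ⟨J, hJP, (hT J hJ).1⟩

lemma LHS.dv_total (hs : s.FiniteCharacter) (H : LHS s) {P : Ideal D} (hP : s.IsMaxStarIdeal P)
    (a b : D) : Dv P a b ∨ Dv P b a := by
  have hPp := hP.isPrime
  by_cases ha0 : a = 0
  · exact Or.inr ⟨1, P.primeCompl.one_mem, by simp [ha0]⟩
  by_cases haP : a ∈ P
  swap
  · exact Or.inl ⟨a, haP, dvd_mul_right _ _⟩
  obtain ⟨I, hIP, hI, hsup⟩ := H.exists_mem hP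
  obtain ⟨I0, hI0, hI0fg, hI0I⟩ := isFT_iff.mp hI.2.2.1
  have hinj := IsFractionRing.injective D K
  have hI0P : I0 ≤ P := (hI0I ▸ le_st hI0 : I0 ≤ I).trans hIP
  have hinvI : s.StarInvertible (s.st I0) := by
    rw [hI0I]; exact hsup I hI.2.1 hI.2.2.1 le_rfl
  obtain ⟨k0, hk0, c, hcI0, u, hu, hcu⟩ := inv_local hP hI0 hinvI
  have hc0 : c ≠ 0 := by
    rintro rfl
    rw [map_zero, mul_zero] at hcu
    have : u = 0 := hinj (by rw [← hcu, map_zero])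
    exact hu (this ▸ P.zero_mem)
  have hcdiv : ∀ y ∈ I0, c ∣ u * y := by
    intro y hy
    obtain ⟨d, hd⟩ := hk0 y hy
    refine ⟨d, hinj ?_⟩
    rw [map_mul, map_mul, ← hd, ← hcu]; ring
  obtain ⟨N, hN⟩ := H.pow hs hP haP ha0 (hI0P hcI0) hc0
  refine dv_total_of_triple hc0 ?_ N a b hN
  clear! a
  intro a b
  have hne : I0 ⊔ Ideal.span {a, b} ≠ ⊥ := ne_bot_of_le hI0 le_sup_left
  have hinv : s.StarInvertible (s.st (I0 ⊔ Ideal.span {a, b})) := by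
    refine hsup _ (isStarIdeal_st hne) (isFT_iff.mpr ⟨_, hne, ?_, rfl⟩) ?_
    · exact Submodule.FG.sup hI0fg (Submodule.fg_span (by simp))
    · rw [← hI0I]; exact st_mono hI0 le_sup_left
  obtain ⟨k, hk, j, hj, w, hw, hjw⟩ := inv_local hP hne hinv
  obtain ⟨c', hc'⟩ := hk c (Submodule.mem_sup_left hcI0)
  obtain ⟨a', ha'⟩ := hk a (Submodule.mem_sup_right (Ideal.subset_span (by simp)))
  obtain ⟨b', hb'⟩ := hk b (Submodule.mem_sup_right (Ideal.subset_span (by simp)))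
  have cross : ∀ x x' y y' : D, k * algebraMap D K x = algebraMap D K x' →
      k * algebraMap D K y = algebraMap D K y' → x' ∉ P → Dv P x y := by
    intro x x' y y' hx hy hxP
    refine ⟨x', hxP, y', hinj ?_⟩
    rw [map_mul, map_mul, ← hx, ← hy]; ring
  by_cases haP : a' ∈ P
  swap
  · exact Or.inr (Or.inl (cross _ _ _ _ ha' hb' haP))
  by_cases hbP : b' ∈ P
  swap
  · exact Or.inr (Or.inr (cross _ _ _ _ hb' ha' hbP))
  by_cases hcP : c' ∈ P
  swap
  · exact Or.inl ⟨cross _ _ _ _ hc' ha' hcP, cross _ _ _ _ hc' hb' hcP⟩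
  exfalso
  obtain ⟨i, hi, z, hz, rfl⟩ := Submodule.mem_sup.mp hj
  obtain ⟨p, q, rfl⟩ := Ideal.mem_span_pair.mp hz
  obtain ⟨v, hv⟩ := hcdiv i hi
  have : u * w = c' * v + u * (p * a' + q * b') := by
    apply hinj
    simp only [map_mul, map_add] at hjw ⊢
    rw [← hjw, ← ha', ← hb', ← hc']
    have hv' := congrArg (algebraMap D K) hv
    rw [map_mul, map_mul] at hv'
    linear_combination k * hv'
  have hmem : u * w ∈ P := by
    rw [this]
    exact P.add_mem (P.mul_mem_right _ hcP) (P.mul_mem_left _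
      (P.add_mem (P.mul_mem_left _ haP) (P.mul_mem_left _ hbP)))
  exact (hPp.mem_or_mem hmem).elim hu hw

lemma LHS.height (hs : s.FiniteCharacter) (H : LHS s) {P : Ideal D} (hP : s.IsMaxStarIdeal P)
    {Q : Ideal D} (hQ : Q.IsPrime) (hQP : Q ≤ P) (hQ0 : Q ≠ ⊥) : Q = P := by
  refine le_antisymm hQP fun c hc => ?_
  obtain ⟨x, hxQ, hx⟩ := Submodule.exists_mem_ne_zero_of_ne_bot hQ0
  by_cases hc0 : c = 0
  · simp [hc0]
  obtain ⟨N, t, ht, h⟩ := H.pow hs hP (hQP hxQ) hx hc hc0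
  have := hQ.mem_or_mem (Q.mem_of_dvd h hxQ)
  exact hQ.mem_of_pow_mem N (this.resolve_left fun h => ht (hQP h))

lemma LHS.rhs (hs : s.FiniteCharacter) (H : LHS s) :
    s.IsIRKT ∧ ∀ P : Ideal D, s.IsMaxStarIdeal P →
      P ≠ ⊥ ∧ ∀ Q : Ideal D, Q.IsPrime → Q < P → Q = ⊥ := by
  refine ⟨⟨?_, ?_, ?_, ?_⟩, ?_⟩
  · intro P _ hP
    exact valuationRing_iff.mpr (H.dv_total hs hP)
  · intro x hx
    obtain ⟨a, b, hb, rfl⟩ := IsFractionRing.div_surjective (A := D) x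
    have hb0 : b ≠ 0 := nonZeroDivisors.ne_zero hb
    have hb0' : algebraMap D K b ≠ 0 := by simpa using hb0
    have : a ∈ Ideal.span {b} := by
      refine local_global hs (isStarIdeal_span hb0) fun P hP => ?_
      obtain ⟨d, t, ht, h⟩ := hx P hP
      refine ⟨t, ht, Ideal.mem_span_singleton.mpr ⟨d, IsFractionRing.injective D K ?_⟩⟩
      rw [map_mul, map_mul, ← h]
      field_simp
    obtain ⟨d, hd⟩ := Ideal.mem_span_singleton.mp this
    refine ⟨d, ?_⟩
    rw [hd, map_mul]
    field_simp
  · intro x hx hu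
    obtain ⟨T, hT, hle⟩ := H.prod_le hx hu
    classical
    refine Set.Finite.of_finite_image (f := fun P : Ideal D => (P : Set D)) ?_
      (fun _ _ _ _ h => SetLike.coe_injective h)
    refine (T.toFinset.image s.MSet).finite_toSet.subset ?_
    rintro _ ⟨P, ⟨hP, hxP⟩, rfl⟩
    obtain ⟨J, hJ, hJP⟩ := hP.isPrime.multiset_prod_le.mp
      (hle.trans ((Ideal.span_singleton_le_iff_mem P).mpr hxP))
    simp only [Finset.coe_image, Set.mem_image, Finset.mem_coe, Multiset.mem_toFinset]
    exact ⟨J, hJ, (hT J hJ).1.1.mset_eq hs hP hJP⟩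
  · intro P Q hP hQ hPQ L hL hL0 hle
    exact hPQ ((H.height hs hP hL (hle.trans inf_le_left) hL0).symm.trans
      (H.height hs hQ hL (hle.trans inf_le_right) hL0))
  · intro P hP
    refine ⟨hP.ne_bot, fun Q hQ hQP => ?_⟩
    by_contra hQ0
    exact hQP.ne (H.height hs hP hQ hQP.le hQ0)

/-! ### The converse -/

lemma st_fg_dvd {J0 : Ideal D} (hJ0 : J0 ≠ ⊥) {j t : D} (hj : j ≠ 0)
    (h : ∀ y ∈ J0, j ∣ t * y) {y : D} (hy : y ∈ s.st J0) : j ∣ t * y := by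
  rw [← Ideal.mem_span_singleton]
  exact smul_mem_of_st hJ0 (isStarIdeal_span hj)
    (fun a ha => Ideal.mem_span_singleton.mpr (h a ha)) hy

lemma starInvertible_of_local (hs : s.FiniteCharacter) {J0 : Ideal D} (hJ0 : J0 ≠ ⊥)
    (h : ∀ P, s.IsMaxStarIdeal P → ∃ j ∈ J0, ∃ t, t ∉ P ∧ ∀ y ∈ J0, j ∣ t * y) :
    s.StarInvertible (s.st J0) := by
  have hJ := st_ne (s := s) hJ0
  have hle : (s.st J0 : FractionalIdeal D⁰ K) * (s.st J0 : FractionalIdeal D⁰ K)⁻¹ ≤ 1 := by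
    rw [FractionalIdeal.mul_le]
    intro y hy k hk
    rw [mul_comm]
    exact (FractionalIdeal.mem_inv_iff (aux_ne hJ)).mp hk y hy
  obtain ⟨A, hA⟩ := FractionalIdeal.le_one_iff_exists_coeIdeal.mp hle
  have hJA : s.st J0 ≤ A := by
    rw [← FractionalIdeal.coeIdeal_le_coeIdeal K, hA]
    intro y hy
    rw [← mul_one y]
    refine FractionalIdeal.mul_mem_mul hy ?_
    rw [FractionalIdeal.mem_inv_iff (aux_ne hJ)]
    intro y hy
    rw [one_mul]
    exact FractionalIdeal.coeIdeal_le_one hy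
  have hA0 : A ≠ ⊥ := ne_bot_of_le hJ hJA
  unfold StarInvertible
  rw [← hA, star_eq_one_iff hA0, Ideal.eq_top_iff_one]
  refine local_global hs (isStarIdeal_st hA0) fun P hP => ?_
  obtain ⟨j, hj, t, ht, hdiv⟩ := h P hP
  refine ⟨t, ht, ?_⟩
  rw [mul_one]
  refine le_st hA0 ?_
  have hj0 : j ≠ 0 := by
    rintro rfl
    obtain ⟨y, hy, hy0⟩ := Submodule.exists_mem_ne_zero_of_ne_bot hJ0
    have := zero_dvd_iff.mp (hdiv y hy)
    rcases mul_eq_zero.mp this with h | h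
    · exact ht (h ▸ P.zero_mem)
    · exact hy0 h
  have hj0' : algebraMap D K j ≠ 0 := by simpa using hj0
  have hk : algebraMap D K t / algebraMap D K j ∈ (s.st J0 : FractionalIdeal D⁰ K)⁻¹ := by
    rw [FractionalIdeal.mem_inv_iff (aux_ne hJ)]
    intro y hy
    obtain ⟨y, hy', rfl⟩ := (FractionalIdeal.mem_coeIdeal _).mp hy
    obtain ⟨d, hd⟩ := st_fg_dvd hJ0 hj0 hdiv hy'
    refine (FractionalIdeal.mem_one_iff _).mpr ⟨d, ?_⟩
    have := congrArg (algebraMap D K) hd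
    rw [map_mul, map_mul] at this
    field_simp
    rw [this]
    try ring
  have hmem : algebraMap D K j * (algebraMap D K t / algebraMap D K j) ∈
      (A : FractionalIdeal D⁰ K) := by
    rw [hA]
    exact FractionalIdeal.mul_mem_mul (FractionalIdeal.mem_coeIdeal_of_mem _ (le_st hJ0 hj)) hk
  rw [mul_div_cancel₀ _ hj0', FractionalIdeal.mem_coeIdeal] at hmem
  obtain ⟨t', ht', h'⟩ := hmem
  rwa [← IsFractionRing.injective D K h']

lemma Cx_le {x : D} {P : Ideal D} [hP : P.IsPrime] (hx : x ∈ P) : Cx x P ≤ P := by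
  intro d hd
  obtain ⟨t, ht, h⟩ := mem_Cx.mp hd
  exact (hP.mem_or_mem (P.mem_of_dvd h hx)).resolve_left ht

lemma mem_Cx_self {x : D} {P : Ideal D} [hP : P.IsPrime] : x ∈ Cx x P :=
  mem_Cx.mpr ⟨1, P.primeCompl.one_mem, by simp⟩

lemma RHS.lhs (hs : s.FiniteCharacter)
    (hval : ∀ P : Ideal D, s.IsMaxStarIdeal P → ∀ a b : D, Dv P a b ∨ Dv P b a)
    (hfin : s.FiniteStarCharacter)
    (hht : ∀ P : Ideal D, s.IsMaxStarIdeal P → ∀ Q : Ideal D, Q.IsPrime → Q < P → Q = ⊥) :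
    LHS s := by
  intro x hx hu
  obtain ⟨S, hS⟩ := (hfin x hx hu).exists_finset_coe
  have hSm : ∀ P, P ∈ S ↔ s.IsMaxStarIdeal P ∧ x ∈ P := fun P => by
    rw [← Finset.mem_coe, hS]; rfl
  have hne : ∀ P, s.IsMaxStarIdeal P → Cx x P ≠ ⊥ := fun P hP => by
    have := hP.isPrime
    intro h
    have h2 : x ∈ Cx x P := mem_Cx_self
    rw [h] at h2
    exact hx (by simpa using h2)
  have huniq : ∀ P ∈ S, ∀ Q, s.IsMaxStarIdeal Q → Cx x P ≤ Q → Q = P := by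
    intro P hPS Q hQ hle
    obtain ⟨hP, hxP⟩ := (hSm P).mp hPS
    have := hP.isPrime
    refine hP.2.2 Q hQ.1 hQ.2.1 fun c hc => ?_
    obtain ⟨N, hN⟩ := height_one_pow (hht P hP) hx hc
    exact hQ.isPrime.mem_of_pow_mem N (hle (mem_Cx.mpr hN))
  have hstar : ∀ P ∈ S, s.IsStarIdeal (Cx x P) := by
    intro P hPS
    obtain ⟨hP, hxP⟩ := (hSm P).mp hPS
    have := hP.isPrime
    refine isStarIdeal_of_st_le (hne P hP) fun d hd => ?_
    obtain ⟨F, hF0, hFfg, hFle, hdF⟩ := fin_char hs (hne P hP) hd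
    have : ∃ t, t ∉ P ∧ ∀ y ∈ F, x ∣ t * y := by
      clear hdF hF0
      induction F, hFfg using Submodule.fg_induction with
      | singleton y =>
        obtain ⟨t, ht, h⟩ := mem_Cx.mp (hFle (Submodule.mem_span_singleton_self y))
        refine ⟨t, ht, fun z hz => ?_⟩
        obtain ⟨w, rfl⟩ := Ideal.mem_span_singleton.mp hz
        rw [← mul_assoc]; exact h.mul_right _
      | sup F1 F2 _ _ ih1 ih2 =>
        obtain ⟨t1, ht1, h1⟩ := ih1 (le_sup_left.trans hFle)
        obtain ⟨t2, ht2, h2⟩ := ih2 (le_sup_right.trans hFle)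
        refine ⟨t1 * t2, P.primeCompl.mul_mem ht1 ht2, fun y hy => ?_⟩
        obtain ⟨u, hu, v, hv, rfl⟩ := Submodule.mem_sup.mp hy
        have : t1 * t2 * (u + v) = t2 * (t1 * u) + t1 * (t2 * v) := by ring
        rw [this]
        exact dvd_add ((h1 u hu).mul_left _) ((h2 v hv).mul_left _)
    obtain ⟨t, ht, h⟩ := this
    exact mem_Cx.mpr ⟨t, ht, st_fg_dvd hF0 hx h hdF⟩
  have hft : ∀ P ∈ S, s.IsFiniteTypeStarIdeal (Cx x P) := by
    intro P hPS
    obtain ⟨hP, hxP⟩ := (hSm P).mp hPS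
    have := hP.isPrime
    classical
    obtain ⟨y, hy, hyS⟩ : ∃ y ∈ Cx x P, ∀ Q ∈ S, Q ≠ P → y ∉ Q := by
      by_contra! hcon
      have hsub : ((Cx x P : Ideal D) : Set D) ⊆
          ⋃ i ∈ ((S.erase P : Finset (Ideal D)) : Set (Ideal D)), ((id i : Ideal D) : Set D) := by
        intro y hy
        obtain ⟨Q, hQ, hQP, hyQ⟩ := hcon y hy
        simp only [Set.mem_iUnion]
        exact ⟨Q, Finset.mem_coe.mpr (Finset.mem_erase.mpr ⟨hQP, hQ⟩), hyQ⟩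
      obtain ⟨Q, hQ, hle⟩ := (Ideal.subset_union_prime ⊤ ⊤ (fun i hi _ _ =>
        ((hSm i).mp (Finset.mem_of_mem_erase hi)).1.isPrime)).mp hsub
      exact (Finset.ne_of_mem_erase hQ)
        (huniq P hPS Q ((hSm Q).mp (Finset.mem_of_mem_erase hQ)).1 hle)
    have hxy0 : Ideal.span {x, y} ≠ ⊥ := by
      intro h
      have : x ∈ Ideal.span {x, y} := Ideal.subset_span (by simp)
      rw [h] at this
      exact hx (by simpa using this)
    have hxm : x ∈ s.st (Ideal.span {x, y}) := le_st hxy0 (Ideal.subset_span (by simp))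
    have hym : y ∈ s.st (Ideal.span {x, y}) := le_st hxy0 (Ideal.subset_span (by simp))
    refine isFT_iff.mpr ⟨Ideal.span {x, y}, hxy0, Submodule.fg_span (by simp), ?_⟩
    refine le_antisymm (st_le hxy0 (hstar P hPS) ?_) ?_
    · rw [Ideal.span_le]
      rintro z (rfl | rfl)
      · exact mem_Cx_self
      · exact hy
    · intro d hd
      refine local_global hs (isStarIdeal_st hxy0) fun Q hQ => ?_
      by_cases hQP : Q = P
      · subst hQP
        obtain ⟨t, ht, h⟩ := mem_Cx.mp hd
        exact ⟨t, ht, Ideal.mem_of_dvd _ h hxm⟩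
      by_cases hxQ : x ∈ Q
      · exact ⟨y, hyS Q ((hSm Q).mpr ⟨hQ, hxQ⟩) hQP, Ideal.mul_mem_right _ _ hym⟩
      · exact ⟨x, hxQ, Ideal.mul_mem_right _ _ hxm⟩
  have hle : ∀ P ∈ S, Cx x P ≤ P := fun P hPS => by
    obtain ⟨hP, hxP⟩ := (hSm P).mp hPS
    have := hP.isPrime
    exact Cx_le hxP
  have hJP : ∀ P ∈ S, ∀ J : Ideal D, J ≠ ⊤ → s.IsStarIdeal J → Cx x P ≤ J → J ≤ P := by
    intro P hPS J hJ hJs hle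
    obtain ⟨Q, hQ, hJQ⟩ := exists_max hs hJs hJ
    have := huniq P hPS Q hQ (hle.trans hJQ)
    exact this ▸ hJQ
  have hhom : ∀ P ∈ S, s.IsHomog (Cx x P) := by
    intro P hPS
    obtain ⟨hP, hxP⟩ := (hSm P).mp hPS
    refine ⟨fun h => hP.1 (top_le_iff.mp (h ▸ hle P hPS)), hstar P hPS, hft P hPS, ?_⟩
    intro J J' hJ hJ' hJs hJs' _ _ h1 h2 h3
    have hn : J + J' ≠ ⊥ := ne_bot_of_le hJs.1 le_sup_left
    rw [star_eq_one_iff hn] at h3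
    have := st_le hn hP.2.1 (sup_le (hJP P hPS J hJ hJs h1) (hJP P hPS J' hJ' hJs' h2))
    rw [h3] at this
    exact hP.1 (top_le_iff.mp this)
  refine ⟨S.val.map (Cx x), ?_, ?_⟩
  · intro I hI
    obtain ⟨P, hPS, rfl⟩ := Multiset.mem_map.mp hI
    have hPS : P ∈ S := hPS
    obtain ⟨hP, hxP⟩ := (hSm P).mp hPS
    have hPp := hP.isPrime
    refine ⟨⟨hhom P hPS, ?_⟩, hhom P hPS, ?_⟩
    · intro J hJs hJft hIJ
      obtain ⟨J0, hJ0, hJ0fg, rfl⟩ := isFT_iff.mp hJft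
      refine starInvertible_of_local hs hJ0 fun Q hQ => ?_
      have := hQ.isPrime
      exact fg_local_principal (hval Q hQ) hJ0fg
    · intro M hMp hM y hyM hy0
      have hMP : M = P := SetLike.coe_injective (hM.trans ((hhom P hPS).mset_eq hs hP (hle P hPS)))
      subst hMP
      obtain ⟨N, t, ht, hN⟩ := height_one_pow (hht M hP) hx hyM
      refine ⟨N, Nat.pos_of_ne_zero ?_, ?_⟩
      · rintro rfl
        rw [pow_zero, mul_one] at hN
        exact ht (M.mem_of_dvd hN hxP)
      · intro z hz
        obtain ⟨r, hr, hz'⟩ := mem_map_iff_dv.mp (Ideal.mem_comap.mp hz)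
        refine mem_Cx.mpr ⟨t * r, M.primeCompl.mul_mem ht hr, ?_⟩
        rw [mul_assoc]
        exact hN.trans (mul_dvd_mul_left t hz')
  · change s.star ((∏ P ∈ S, Cx x P : Ideal D) : FractionalIdeal D⁰ K) = _
    have hn : ∏ P ∈ S, Cx x P ≠ ⊥ :=
      Finset.prod_ne_zero_iff.mpr fun P hP => hne P ((hSm P).mp hP).1
    rw [← coe_st hn, FractionalIdeal.coeIdeal_inj]
    refine le_antisymm (st_le hn (isStarIdeal_span hx) fun d hd => ?_) ?_
    · refine local_global hs (isStarIdeal_span hx) fun P hP => ?_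
      have := hP.isPrime
      by_cases hxP : x ∈ P
      · have hPS := (hSm P).mpr ⟨hP, hxP⟩
        have hd' : d ∈ Cx x P := (Ideal.prod_le_inf.trans (Finset.inf_le hPS)) hd
        obtain ⟨t, ht, h⟩ := mem_Cx.mp hd'
        exact ⟨t, ht, Ideal.mem_span_singleton.mpr h⟩
      · exact ⟨x, hxP, Ideal.mul_mem_right _ _ (Ideal.mem_span_singleton_self x)⟩
    · rw [Ideal.span_singleton_le_iff_mem]
      refine local_global hs (isStarIdeal_st hn) fun P hP => ?_
      have hPp := hP.isPrime
      classical
      have hnot : ¬ ∏ Q ∈ S.erase P, Cx x Q ≤ P := by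
        rw [hPp.prod_le]
        rintro ⟨Q, hQ, hQP⟩
        exact (Finset.ne_of_mem_erase hQ)
          (huniq Q (Finset.mem_of_mem_erase hQ) P hP hQP).symm
      obtain ⟨t, ht, htP⟩ := Set.not_subset.mp hnot
      refine ⟨t, htP, le_st hn ?_⟩
      by_cases hPS : P ∈ S
      · rw [← Finset.mul_prod_erase S _ hPS, mul_comm t]
        exact Ideal.mul_mem_mul mem_Cx_self ht
      · rw [Finset.erase_eq_of_notMem hPS] at ht
        exact Ideal.mul_mem_right _ _ ht

end StarOperation

/-- `D` is a `*`-super SH domain of type 1 iff `D` is a `*`-IRKT in which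
every maximal `*`-ideal has height 1 (a `*`-generalized Krull domain). -/
theorem superSHType1_iff_GKD {D K : Type*} [CommRing D] [IsDomain D] [Field K]
    [Algebra D K] [IsFractionRing D K] (s : StarOperation D K) (hs : s.FiniteCharacter) :
    (∀ x : D, x ≠ 0 → ¬IsUnit x →
      ∃ T : Multiset (Ideal D), (∀ J ∈ T, s.IsSuperHomog J ∧ s.IsHomogType1 J) ∧
        s.star ((T.prod : Ideal D) : FractionalIdeal D⁰ K) =
          ((Ideal.span {x} : Ideal D) : FractionalIdeal D⁰ K)) ↔
    (s.IsIRKT ∧ ∀ P : Ideal D, s.IsMaxStarIdeal P →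
      P ≠ ⊥ ∧ ∀ Q : Ideal D, Q.IsPrime → Q < P → Q = ⊥) := by
  constructor
  · intro H
    exact StarOperation.LHS.rhs hs H
  · rintro ⟨⟨h1, -, h3, -⟩, h5⟩
    refine StarOperation.RHS.lhs hs (fun P hP => ?_) h3 (fun P hP => (h5 P hP).2)
    have := hP.isPrime
    exact StarOperation.valuationRing_iff.mp (h1 P hP)
end
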